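/- arXiv:2506.22857 — 2 statements merged into one kernel-verified Lean document; each statement's English description precedes it below -/
import Mathlib

section
/- For every non-acyclic graph G, the branchwidth and treewidth satisfy bw(G) - 1 ≤ tw(G) ≤ ⌊(3/2)·bw(G)⌋ - 1. -/
open SimpleGraph Set

universe u

/-- A branch-decomposition of a graph `G`: a ternary tree `T` (internal vertices of
degree 3) together with a bijection from the edges of `G` to the leaves of `T`. -/
structure BranchDecomp {V : Type u} (G : SimpleGraph V) : Type (u + 1) where
  t : Type
  fin : Fintype t
  T : SimpleGraph t
  isTree : T.IsTree
  ternary : ∀ v : t, (T.neighborSet v).ncard ≤ 1 ∨ (T.neighborSet v).ncard = 3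
  τ : G.edgeSet ≃ {v : t // (T.neighborSet v).ncard ≤ 1}

namespace BranchDecomp

variable {V : Type u} {G : SimpleGraph V} (B : BranchDecomp G)

/-- The edges of `G` whose leaves lie on the `a`-side of the tree edge `ab`. -/
def side (a b : B.t) : Set G.edgeSet :=
  {e | (B.T.deleteEdges {s(a, b)}).Reachable a (B.τ e).1}

/-- The boundary `∂(X_e)` of the bipartition of `E(G)` induced by the tree edge `ab`:
vertices incident to edges on both sides. -/
def bdry (a b : B.t) : Set V :=
  {v | (∃ e : G.edgeSet, e ∈ B.side a b ∧ v ∈ (e : Sym2 V)) ∧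
       (∃ e : G.edgeSet, e ∉ B.side a b ∧ v ∈ (e : Sym2 V))}

/-- The width of a branch-decomposition: the maximum, over edges of the tree, of the
size of the corresponding boundary. -/
noncomputable def width : ℕ :=
  sSup {n | ∃ a b : B.t, B.T.Adj a b ∧ n = (B.bdry a b).ncard}

end BranchDecomp

/-- The branchwidth of a graph: the minimum width of a branch-decomposition. -/
noncomputable def branchwidth {V : Type u} (G : SimpleGraph V) : ℕ :=
  sInf {n | ∃ B : BranchDecomp G, B.width = n}

/-- A tree-decomposition of a graph. -/
structure TreeDecomp {V : Type u} (G : SimpleGraph V) : Type (u + 1) where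
  t : Type
  fin : Fintype t
  T : SimpleGraph t
  isTree : T.IsTree
  β : t → Set V
  covers_edge : ∀ ⦃u v : V⦄, G.Adj u v → ∃ x, u ∈ β x ∧ v ∈ β x
  covers_vert : ∀ v : V, ∃ x, v ∈ β x
  subtree : ∀ v : V, (T.induce {x | v ∈ β x}).Connected

/-- The width of a tree-decomposition: maximum bag size minus one. -/
noncomputable def TreeDecomp.width {V : Type u} {G : SimpleGraph V} (D : TreeDecomp G) : ℕ :=
  sSup {n | ∃ x : D.t, n + 1 = (D.β x).ncard}

/-- The treewidth of a graph. -/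
noncomputable def treewidth {V : Type u} (G : SimpleGraph V) : ℕ :=
  sInf {n | ∃ D : TreeDecomp G, D.width = n}

/-- A minor model of `H` in `G`: disjoint connected branch sets with edges realized. -/
def IsMinorModel {V : Type u} {W : Type*} (G : SimpleGraph V) (H : SimpleGraph W)
    (φ : W → Set V) : Prop :=
  (∀ w, (G.induce (φ w)).Connected) ∧
  (Pairwise fun w₁ w₂ => Disjoint (φ w₁) (φ w₂)) ∧
  (∀ ⦃w₁ w₂ : W⦄, H.Adj w₁ w₂ → ∃ a ∈ φ w₁, ∃ b ∈ φ w₂, G.Adj a b)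

/-- `G` has `H` as a minor. -/
def HasMinor {V : Type u} {W : Type*} (G : SimpleGraph V) (H : SimpleGraph W) : Prop :=
  ∃ φ : W → Set V, IsMinorModel G H φ

/-- The `(k × k)`-grid. -/
def gridGraph (k : ℕ) : SimpleGraph (Fin k × Fin k) :=
  SimpleGraph.fromRel fun p q =>
    (p.1 = q.1 ∧ (p.2 : ℕ) + 1 = (q.2 : ℕ)) ∨ (p.2 = q.2 ∧ (p.1 : ℕ) + 1 = (q.1 : ℕ))

/-!
Lower bound. Given a tree-decomposition, place every edge of `G` at a node whose bag contains it. A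
node `x` displays a set `S` of edges if `x` separates the places of `S` from those of the other
edges; the boundary of `S` then lies in the bag of `x`. The complement of a single edge is
displayed, and every displayed set with at least two elements splits into two displayed sets: move
`x` towards `S` until it separates two elements of `S`. Splitting recursively yields a binary tree
of displayed sets, that is, a branch-decomposition all of whose boundaries lie in bags.

Upper bound. Given a branch-decomposition, let the bag of a node `x` consist of the vertices `v`
such that `x` lies in the subtree spanned by the leaves of the edges at `v`. The bag of a leaf is
an edge. If `x` is internal, every vertex of its bag is in the boundary of at least two of the
three tree edges at `x`, so the bag has at most `3 / 2` times the width many elements. A vertex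
without edges needs a bag of its own. Finally, an edge on a cycle shares each of its ends with
another edge, so the branchwidth of a graph with a cycle is at least `2` and the bags of the leaves
are harmless.
-/

section Separation

variable {t : Type*} {T : SimpleGraph t} {x y a b c : t}

lemma mem_of_reachable {s : Set t} (hs : ∀ ⦃a b⦄, T.Adj a b → a ∈ s → b ∈ s)
    (hab : T.Reachable a b) (ha : a ∈ s) : b ∈ s := by
  obtain ⟨w⟩ := hab
  induction w with
  | nil => exact ha
  | cons h _ ih => exact ih (hs h ha)

lemma reachable_deleteEdges_or_of_reachable (h : T.Reachable x a) :
    (T.deleteEdges {s(x, y)}).Reachable x a ∨ (T.deleteEdges {s(x, y)}).Reachable y a := by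
  refine mem_of_reachable (s := {z | (T.deleteEdges {s(x, y)}).Reachable x z ∨
    (T.deleteEdges {s(x, y)}).Reachable y z}) (fun c d hcd hc ↦ ?_) h (.inl .rfl)
  by_cases he : s(c, d) = s(x, y)
  · rcases Sym2.eq_iff.1 he with ⟨-, rfl⟩ | ⟨-, rfl⟩
    exacts [.inr .rfl, .inl .rfl]
  · have hstep : (T.deleteEdges {s(x, y)}).Reachable c d :=
      (deleteEdges_adj.2 ⟨hcd, he⟩).reachable
    exact hc.imp (·.trans hstep) (·.trans hstep)

lemma exists_adj_dist_lt (hT : T.IsTree) (hxa : x ≠ a) :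
    ∃ y, T.Adj x y ∧ T.dist y a < T.dist x a ∧ ¬ (T.deleteEdges {s(x, y)}).Reachable x a := by
  obtain ⟨p, hp, hlen⟩ := hT.connected.exists_path_of_dist x a
  cases p with
  | nil => exact absurd rfl hxa
  | @cons _ y _ hxy q =>
    have hbridge := isAcyclic_iff_forall_adj_isBridge.1 hT.isAcyclic hxy
    have hq : s(x, y) ∉ q.edges := (Walk.isTrail_cons _ _).1 hp.isTrail |>.2
    refine ⟨y, hxy, ?_, fun hxa' ↦ isBridge_iff.1 hbridge (hxa'.trans ?_)⟩
    · rw [← hlen, Walk.length_cons]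
      exact Nat.lt_succ_of_le (dist_le q)
    · exact ⟨(q.toDeleteEdge _ hq).reverse⟩

/-- The vertex `x` separates `a` from `b` in `T`: every walk from `a` to `b` passes through `x`.
The endpoints count, so `a` and `b` themselves separate `a` from `b`. -/
def Separates (T : SimpleGraph t) (x a b : t) : Prop :=
  ∀ w : T.Walk a b, x ∈ w.support

namespace Separates

lemma left (T : SimpleGraph t) (a b : t) : Separates T a a b :=
  fun w ↦ w.start_mem_support

lemma symm (h : Separates T x a b) : Separates T x b a :=
  fun w ↦ by simpa using h w.reverse

lemma of_mem_support_of_isPath (hT : T.IsAcyclic) {p : T.Walk a b} (hp : p.IsPath)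
    (hx : x ∈ p.support) : Separates T x a b := by
  classical
  intro w
  have hpw : p = w.bypass :=
    congrArg Subtype.val ((hT.subsingleton_path a b).elim ⟨p, hp⟩ ⟨w.bypass, w.bypass_isPath⟩)
  exact w.support_bypass_subset_support (hpw ▸ hx)

lemma mem_of_preconnected_induce (h : Separates T x a b) {s : Set t}
    (hs : (T.induce s).Preconnected) (ha : a ∈ s) (hb : b ∈ s) : x ∈ s := by
  obtain ⟨w⟩ := hs ⟨a, ha⟩ ⟨b, hb⟩
  have hx : x ∈ (w.map (Embedding.induce s).toHom).support := h _
  rw [Walk.support_map, List.mem_map] at hx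
  obtain ⟨z, -, rfl⟩ := hx
  exact z.2

lemma of_separates_of_not_separates (hab : Separates T x a b) (hac : ¬ Separates T x a c) :
    Separates T x c b := by
  obtain ⟨w, hw⟩ := not_forall.1 hac
  intro w'
  exact ((Walk.mem_support_append_iff w w').1 (hab _)).resolve_left hw

lemma of_not_reachable_deleteEdges (h : Separates T x a b)
    (hxa : ¬ (T.deleteEdges {s(x, y)}).Reachable x a) : Separates T y a b := by
  classical
  intro w
  have hedge : s(x, y) ∈ (w.takeUntil x (h w)).edges :=
    Walk.mem_edges_of_not_reachable_deleteEdges _ (mt Reachable.symm hxa)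
  exact w.support_takeUntil_subset_support (h w) (Walk.snd_mem_support_of_mem_edges _ hedge)

lemma reachable_deleteEdges_of_not (h : ¬ Separates T x a b) (y : t) :
    (T.deleteEdges {s(x, y)}).Reachable a b := by
  by_contra hab
  exact h fun w ↦ w.fst_mem_support_of_mem_edges (w.mem_edges_of_not_reachable_deleteEdges hab)

lemma reachable_of_not_reachable (h : Separates T x a b) (hab : T.Reachable a b)
    (hxa : ¬ (T.deleteEdges {s(x, y)}).Reachable x a) :
    (T.deleteEdges {s(x, y)}).Reachable x b := by
  by_contra hxb
  obtain ⟨p, hp⟩ := hab.exists_isPath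
  rw [Sym2.eq_swap] at hxa hxb
  exact hp.isTrail.not_mem_support_of_not_reachable (mt Reachable.symm hxa)
    (mt Reachable.symm hxb) (h p)

lemma eq_or_eq_of_subsingleton_neighborSet (h : Separates T x a b) (hab : T.Reachable a b)
    (hx : (T.neighborSet x).Subsingleton) : x = a ∨ x = b := by
  obtain ⟨p, hp⟩ := hab.exists_isPath
  by_contra! hne
  exact hp.isTrail.not_mem_support_of_subsingleton_neighborSet hne.1 hne.2 hx (h p)

end Separates

end Separation

section HasseTree

variable {α : Type*} [PartialOrder α] {a b c : α}

lemma eq_of_covBy_of_isChain_Ici (ha : IsChain (· ≤ ·) (Set.Ici a)) (hab : a ⋖ b) (hac : a ⋖ c) :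
    b = c := by
  rcases ha.total hab.le hac.le with h | h
  · exact (hac.eq_or_eq hab.le h).resolve_left hab.ne'
  · exact ((hab.eq_or_eq hac.le h).resolve_left hac.ne').symm

variable [Finite α]

lemma reachable_of_le_of_forall_covBy {H : SimpleGraph α} (hab : a ≤ b)
    (h : ∀ ⦃c d⦄, a ≤ c → c ⋖ d → d ≤ b → H.Adj c d) : H.Reachable a b := by
  induction a using WellFoundedGT.induction with
  | ind a ih =>
    obtain rfl | hlt := hab.eq_or_lt
    · rfl
    · obtain ⟨c, hac, hcb⟩ := exists_covBy_le_of_lt hlt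
      exact (h le_rfl hac hcb).reachable.trans
        (ih c hac.lt hcb fun d e hcd ↦ h (hac.le.trans hcd))

lemma hasse_reachable_deleteEdges_iff (hα : ∀ a : α, IsChain (· ≤ ·) (Set.Ici a)) (hab : a ⋖ b) :
    ((hasse α).deleteEdges {s(a, b)}).Reachable a c ↔ c ≤ a := by
  constructor
  · refine fun h ↦ mem_of_reachable (s := Set.Iic a) (fun d e hde hda ↦ ?_) h le_rfl
    obtain ⟨hcov | hed, hne⟩ := deleteEdges_adj.1 hde
    · obtain rfl | hlt := (hda : d ≤ a).eq_or_lt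
      · obtain rfl := eq_of_covBy_of_isChain_Ici (hα d) hab hcov
        exact absurd rfl hne
      · obtain ⟨e', hde', hea⟩ := exists_covBy_le_of_lt hlt
        exact (eq_of_covBy_of_isChain_Ici (hα d) hcov hde').trans_le hea
    · exact hed.le.trans hda
  · refine fun hca ↦ (reachable_of_le_of_forall_covBy hca fun d e _ hde hea ↦ ?_).symm
    refine deleteEdges_adj.2 ⟨.inl hde, fun heq ↦ hab.lt.not_ge ?_⟩
    rcases Sym2.eq_iff.1 heq with ⟨-, rfl⟩ | ⟨rfl, -⟩
    exacts [hea, hde.le.trans hea]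

lemma hasse_isTree [OrderTop α] (hα : ∀ a : α, IsChain (· ≤ ·) (Set.Ici a)) :
    (hasse α).IsTree where
  preconnected a b :=
    have reachable_top (c : α) : (hasse α).Reachable c ⊤ :=
      reachable_of_le_of_forall_covBy le_top fun _ _ _ h _ ↦ .inl h
    (reachable_top a).trans (reachable_top b).symm
  nonempty := ⟨⊤⟩
  isAcyclic := by
    have isBridge {a b : α} (hab : a ⋖ b) : (hasse α).IsBridge s(a, b) :=
      fun h ↦ hab.lt.not_ge ((hasse_reachable_deleteEdges_iff hα hab).1 h)
    refine isAcyclic_iff_forall_adj_isBridge.2 fun a b hab ↦ hab.elim isBridge fun hba ↦ ?_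
    exact Sym2.eq_swap ▸ isBridge hba

end HasseTree

section BinaryHierarchy

variable {ι : Type*} [DecidableEq ι] {F F' : Set (Finset ι)} {S A B C D : Finset ι}

/-- A binary hierarchy on the finite set `S`: a laminar family of nonempty subsets of `S` that
contains `S` (unless `S` is empty) and all singletons, and in which every member with at least two
elements is the disjoint union of two members. It is a rooted binary tree with leaf set `S`,
encoded by the sets of leaves below its nodes. -/
structure IsBinaryHierarchy (F : Set (Finset ι)) (S : Finset ι) : Prop where
  subset : ∀ ⦃A⦄, A ∈ F → A ⊆ S
  nonempty : ∀ ⦃A⦄, A ∈ F → A.Nonempty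
  laminar : ∀ ⦃A⦄, A ∈ F → ∀ ⦃B⦄, B ∈ F → A ⊆ B ∨ B ⊆ A ∨ Disjoint A B
  root_mem : S.Nonempty → S ∈ F
  singleton_mem : ∀ ⦃i⦄, i ∈ S → {i} ∈ F
  exists_split : ∀ ⦃A⦄, A ∈ F → A.Nontrivial → ∃ B ∈ F, ∃ C ∈ F, Disjoint B C ∧ B ∪ C = A

namespace IsBinaryHierarchy

protected lemma empty : IsBinaryHierarchy (∅ : Set (Finset ι)) ∅ := by
  constructor <;> simp

protected lemma singleton (i : ι) : IsBinaryHierarchy {{i}} {i} := by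
  constructor <;> simp

lemma insert_union (hA : IsBinaryHierarchy F A) (hB : IsBinaryHierarchy F' B)
    (hA₀ : A.Nonempty) (hB₀ : B.Nonempty) (hAB : Disjoint A B) :
    IsBinaryHierarchy (insert (A ∪ B) (F ∪ F')) (A ∪ B) where
  subset C hC := by
    rcases hC with rfl | hC | hC
    exacts [subset_rfl, (hA.subset hC).trans Finset.subset_union_left,
      (hB.subset hC).trans Finset.subset_union_right]
  nonempty C hC := by
    rcases hC with rfl | hC | hC
    exacts [hA₀.mono Finset.subset_union_left, hA.nonempty hC, hB.nonempty hC]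
  laminar C hC D hD := by
    have sub_root {E : Finset ι} (hE : E ∈ F ∪ F') : E ⊆ A ∪ B :=
      hE.elim (fun h ↦ (hA.subset h).trans Finset.subset_union_left)
        fun h ↦ (hB.subset h).trans Finset.subset_union_right
    rcases hC with rfl | hC
    · rcases hD with rfl | hD
      exacts [.inl subset_rfl, .inr (.inl (sub_root hD))]
    · rcases hD with rfl | hD
      · exact .inl (sub_root hC)
      · rcases hC with hC | hC <;> rcases hD with hD | hD
        exacts [hA.laminar hC hD, .inr (.inr (hAB.mono (hA.subset hC) (hB.subset hD))),
          .inr (.inr (hAB.symm.mono (hB.subset hC) (hA.subset hD))), hB.laminar hC hD]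
  root_mem _ := Set.mem_insert _ _
  singleton_mem i hi := by
    rcases Finset.mem_union.1 hi with hi | hi
    exacts [.inr (.inl (hA.singleton_mem hi)), .inr (.inr (hB.singleton_mem hi))]
  exists_split C hC hC₂ := by
    rcases hC with rfl | hC | hC
    · exact ⟨A, .inr (.inl (hA.root_mem hA₀)), B, .inr (.inr (hB.root_mem hB₀)), hAB, rfl⟩
    · obtain ⟨D, hD, E, hE, h⟩ := hA.exists_split hC hC₂
      exact ⟨D, .inr (.inl hD), E, .inr (.inl hE), h⟩
    · obtain ⟨D, hD, E, hE, h⟩ := hB.exists_split hC hC₂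
      exact ⟨D, .inr (.inr hD), E, .inr (.inr hE), h⟩

lemma subset_or_subset_of_ssubset_union (hF : IsBinaryHierarchy F S) (hB : B ∈ F) (hC : C ∈ F)
    (hD : D ∈ F) (h : D ⊂ B ∪ C) : D ⊆ B ∨ D ⊆ C := by
  obtain hDB | hBD | hdisj := hF.laminar hD hB
  · exact .inl hDB
  · obtain hDC | hCD | hdisj := hF.laminar hD hC
    · exact .inr hDC
    · exact absurd (Finset.union_subset hBD hCD) h.not_subset
    · exact .inl (hdisj.left_le_of_le_sup_right h.subset)
  · exact .inr (hdisj.left_le_of_le_sup_left h.subset)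

end IsBinaryHierarchy

theorem exists_isBinaryHierarchy {P : Finset ι → Prop}
    (hP : ∀ ⦃S⦄, P S → S.Nontrivial →
      ∃ A B, A.Nonempty ∧ B.Nonempty ∧ Disjoint A B ∧ A ∪ B = S ∧ P A ∧ P B)
    (hS : P S) : ∃ F, IsBinaryHierarchy F S ∧ ∀ A ∈ F, P A := by
  induction S using Finset.strongInduction with
  | H S ih =>
    obtain rfl | ⟨i, rfl⟩ | hS₂ := S.eq_empty_or_nonempty.imp_right fun h ↦
      h.exists_eq_singleton_or_nontrivial
    · exact ⟨∅, .empty, by simp⟩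
    · exact ⟨{{i}}, .singleton i, by simpa⟩
    · obtain ⟨A, B, hA₀, hB₀, hAB, rfl, hPA, hPB⟩ := hP hS hS₂
      obtain ⟨F, hF, hPF⟩ := ih A (Finset.ssubset_iff_subset_ne.2 ⟨Finset.subset_union_left,
        fun h ↦ hB₀.ne_empty (hAB.symm.eq_bot_of_le (h ▸ Finset.subset_union_right))⟩) hPA
      obtain ⟨F', hF', hPF'⟩ := ih B (Finset.ssubset_iff_subset_ne.2 ⟨Finset.subset_union_right,
        fun h ↦ hA₀.ne_empty (hAB.eq_bot_of_le (h ▸ Finset.subset_union_left))⟩) hPB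
      refine ⟨_, hF.insert_union hF' hA₀ hB₀ hAB, ?_⟩
      rintro C (rfl | hC | hC)
      exacts [hS, hPF C hC, hPF' C hC]

end BinaryHierarchy

section HierarchyNode

variable {ι : Type*} [Fintype ι] {F : Set (Finset ι)}

/-- The nodes of the tree obtained from a binary hierarchy `F` on all elements but one by hanging
the remaining element above the root: the members of `F` and the whole index set, ordered by
inclusion. The top node is a leaf, which stands for the remaining element. -/
abbrev HierarchyNode (F : Set (Finset ι)) : Type _ :=
  ↥(insert Finset.univ F)

instance : OrderTop (HierarchyNode F) where
  top := ⟨Finset.univ, Set.mem_insert _ _⟩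
  le_top a := Finset.subset_univ a.1

lemma HierarchyNode.mem_of_ne_top {a : HierarchyNode F} (ha : a ≠ ⊤) : a.1 ∈ F :=
  a.2.resolve_left fun h ↦ ha (Subtype.ext h)

end HierarchyNode

section HierarchyTree

namespace IsBinaryHierarchy

variable {ι : Type*} [DecidableEq ι] [Fintype ι] {F : Set (Finset ι)} {i₀ i : ι}
  (hF : IsBinaryHierarchy F (Finset.univ.erase i₀)) {a b c d : HierarchyNode F}

include hF

lemma mem_iff_eq_top : i₀ ∈ a.1 ↔ a = ⊤ := by
  refine ⟨fun h ↦ ?_, fun h ↦ h ▸ Finset.mem_univ _⟩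
  by_contra ha
  exact Finset.notMem_erase _ _ (hF.subset (HierarchyNode.mem_of_ne_top ha) h)

lemma node_nonempty (a : HierarchyNode F) : a.1.Nonempty := by
  by_cases ha : a = ⊤
  exacts [⟨i₀, hF.mem_iff_eq_top.2 ha⟩, hF.nonempty (HierarchyNode.mem_of_ne_top ha)]

lemma isChain_Ici (a : HierarchyNode F) : IsChain (· ≤ ·) (Set.Ici a) := by
  intro b hab c hac _
  by_cases hb : b = ⊤
  · exact .inr (hb ▸ le_top)
  by_cases hc : c = ⊤
  · exact .inl (hc ▸ le_top)
  obtain h | h | h := hF.laminar (HierarchyNode.mem_of_ne_top hb) (HierarchyNode.mem_of_ne_top hc)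
  · exact .inl h
  · exact .inr h
  · obtain ⟨i, hi⟩ := hF.node_nonempty a
    exact absurd (hac hi) (Finset.disjoint_left.1 h (hab hi))

lemma neighborSet_top_subsingleton : ((hasse (HierarchyNode F)).neighborSet ⊤).Subsingleton := by
  suffices h : ∀ a : HierarchyNode F, (hasse (HierarchyNode F)).Adj ⊤ a →
      a.1 = Finset.univ.erase i₀ from fun a ha b hb ↦ Subtype.ext ((h a ha).trans (h b hb).symm)
  intro a ha
  have hcov : a ⋖ ⊤ := (hasse_adj.1 ha).resolve_left fun h ↦ not_top_lt h.lt
  have haF := HierarchyNode.mem_of_ne_top hcov.ne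
  have hsub := hF.subset haF
  let r : HierarchyNode F := ⟨_, .inr (hF.root_mem ((hF.nonempty haF).mono hsub))⟩
  have hr : r ≠ ⊤ := fun h ↦ Finset.notMem_erase i₀ Finset.univ (hF.mem_iff_eq_top.2 h)
  exact congrArg Subtype.val ((hcov.eq_or_eq (c := r) hsub le_top).resolve_right hr).symm

lemma neighborSet_singleton_subsingleton (ha : a.1 = {i}) :
    ((hasse (HierarchyNode F)).neighborSet a).Subsingleton := by
  have hup {b : HierarchyNode F} (hb : (hasse (HierarchyNode F)).Adj a b) : a ⋖ b := by
    refine (hasse_adj.1 hb).resolve_right fun hba ↦ hba.ne (Subtype.ext ?_)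
    exact ((hF.node_nonempty b).subset_singleton_iff.1 (ha ▸ hba.le)).trans ha.symm
  exact fun b hb c hc ↦ eq_of_covBy_of_isChain_Ici (hF.isChain_Ici a) (hup hb) (hup hc)

lemma covBy_iff_of_split (hab : Disjoint a.1 b.1) (hu : a.1 ∪ b.1 = c.1) :
    d ⋖ c ↔ d = a ∨ d = b := by
  have not_le {e : HierarchyNode F} (hea : e ≤ a) (heb : e ≤ b) : False :=
    (hF.node_nonempty e).ne_empty (disjoint_self.1 (hab.mono hea heb))
  have hac : a ≤ c := Finset.subset_union_left.trans hu.subset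
  have hbc : b ≤ c := Finset.subset_union_right.trans hu.subset
  have hac' : a < c := hac.lt_of_ne fun h ↦ not_le (hbc.trans h.ge) le_rfl
  have hbc' : b < c := hbc.lt_of_ne fun h ↦ not_le le_rfl (hac.trans h.ge)
  have below {e : HierarchyNode F} (h : e < c) : e ≤ a ∨ e ≤ b :=
    hF.subset_or_subset_of_ssubset_union (HierarchyNode.mem_of_ne_top hac'.ne_top)
      (HierarchyNode.mem_of_ne_top hbc'.ne_top) (HierarchyNode.mem_of_ne_top h.ne_top) (hu ▸ h)
  constructor
  · intro h
    exact (below h.lt).imp (fun h' ↦ ((h.eq_or_eq h' hac).resolve_right hac'.ne).symm)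
      fun h' ↦ ((h.eq_or_eq h' hbc).resolve_right hbc'.ne).symm
  · rintro (rfl | rfl)
    · exact ⟨hac', fun e hde hec ↦
        (below hec).elim hde.not_ge fun h ↦ not_le le_rfl (hde.le.trans h)⟩
    · exact ⟨hbc', fun e hde hec ↦
        (below hec).elim (fun h ↦ not_le (hde.le.trans h) le_rfl) hde.not_ge⟩

lemma ncard_neighborSet_of_nontrivial (hc : c ≠ ⊤) (hc₂ : c.1.Nontrivial) :
    ((hasse (HierarchyNode F)).neighborSet c).ncard = 3 := by
  obtain ⟨A, hA, B, hB, hAB, hu⟩ := hF.exists_split (HierarchyNode.mem_of_ne_top hc) hc₂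
  have hcov {d} := hF.covBy_iff_of_split (a := ⟨A, .inr hA⟩) (b := ⟨B, .inr hB⟩) (d := d) hAB hu
  obtain ⟨p, hcp, -⟩ := exists_covBy_le_of_lt (lt_top_iff_ne_top.2 hc)
  refine Set.ncard_eq_three.2 ⟨p, ⟨A, .inr hA⟩, ⟨B, .inr hB⟩, ?_, ?_, ?_, ?_⟩
  · exact (((hcov.2 (.inl rfl)).lt).trans hcp.lt).ne'
  · exact (((hcov.2 (.inr rfl)).lt).trans hcp.lt).ne'
  · intro h
    obtain rfl : A = B := congrArg Subtype.val h
    exact (hF.nonempty hA).ne_empty (disjoint_self.1 hAB)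
  · ext d
    rw [mem_neighborSet, hasse_adj, hcov]
    have : c ⋖ d ↔ d = p :=
      ⟨fun h ↦ eq_of_covBy_of_isChain_Ici (hF.isChain_Ici c) h hcp, fun h ↦ h ▸ hcp⟩
    rw [this]
    rfl

lemma ncard_neighborSet_le_one_iff :
    ((hasse (HierarchyNode F)).neighborSet c).ncard ≤ 1 ↔ c = ⊤ ∨ ∃ i, c.1 = {i} := by
  constructor
  · intro h
    by_contra! hc
    have := hF.ncard_neighborSet_of_nontrivial hc.1
      ((hF.node_nonempty c).exists_eq_singleton_or_nontrivial.resolve_left (by simpa using hc.2))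
    omega
  · rintro (rfl | ⟨i, hi⟩)
    · exact Set.ncard_le_one_iff_subsingleton.2 hF.neighborSet_top_subsingleton
    · exact Set.ncard_le_one_iff_subsingleton.2 (hF.neighborSet_singleton_subsingleton hi)

/-- The leaf of the tree of a binary hierarchy that stands for the index `i`. -/
noncomputable def leaf (i : ι) : HierarchyNode F :=
  if hi : i = i₀ then ⊤ else
    ⟨{i}, .inr (hF.singleton_mem (Finset.mem_erase.2 ⟨hi, Finset.mem_univ i⟩))⟩

lemma leaf_self : hF.leaf i₀ = ⊤ :=
  dif_pos rfl

lemma coe_leaf_of_ne (hi : i ≠ i₀) : (hF.leaf i).1 = {i} :=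
  congrArg Subtype.val (dif_neg hi)

lemma leaf_le_iff : hF.leaf i ≤ c ↔ i ∈ c.1 := by
  obtain rfl | hi := eq_or_ne i i₀
  · rw [hF.leaf_self, top_le_iff, hF.mem_iff_eq_top]
  · rw [← Subtype.coe_le_coe, hF.coe_leaf_of_ne hi]
    exact Finset.singleton_subset_iff

lemma ncard_neighborSet_leaf_le_one (i : ι) :
    ((hasse (HierarchyNode F)).neighborSet (hF.leaf i)).ncard ≤ 1 := by
  refine hF.ncard_neighborSet_le_one_iff.2 ?_
  obtain rfl | hi := eq_or_ne i i₀
  exacts [.inl hF.leaf_self, .inr ⟨i, hF.coe_leaf_of_ne hi⟩]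

lemma leaf_injective : Function.Injective hF.leaf := by
  intro i j hij
  wlog hi : i ≠ i₀ generalizing i j
  · obtain rfl : i = i₀ := not_not.1 hi
    by_contra hj
    exact hj (this hij.symm (Ne.symm hj)).symm
  · have hj : j ∈ (hF.leaf i).1 := hF.leaf_le_iff.1 hij.ge
    rw [hF.coe_leaf_of_ne hi, Finset.mem_singleton] at hj
    exact hj.symm

lemma exists_leaf_eq (hc : ((hasse (HierarchyNode F)).neighborSet c).ncard ≤ 1) :
    ∃ i, hF.leaf i = c := by
  by_cases hc_top : c = ⊤
  · exact ⟨i₀, hF.leaf_self.trans hc_top.symm⟩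
  · obtain ⟨i, hi⟩ := (hF.ncard_neighborSet_le_one_iff.1 hc).resolve_left hc_top
    refine ⟨i, Subtype.ext ((hF.coe_leaf_of_ne ?_).trans hi.symm)⟩
    rintro rfl
    exact hc_top (hF.mem_iff_eq_top.1 (hi ▸ Finset.mem_singleton_self i))

lemma ncard_neighborSet_le_one_or_eq_three (c : HierarchyNode F) :
    ((hasse (HierarchyNode F)).neighborSet c).ncard ≤ 1 ∨
      ((hasse (HierarchyNode F)).neighborSet c).ncard = 3 := by
  refine or_iff_not_imp_left.2 fun h ↦ ?_
  rw [hF.ncard_neighborSet_le_one_iff, not_or] at h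
  exact hF.ncard_neighborSet_of_nontrivial h.1
    ((hF.node_nonempty c).exists_eq_singleton_or_nontrivial.resolve_left h.2)

/-- The bijection between the index set and the leaves of the tree of a binary hierarchy. -/
noncomputable def leafEquiv :
    ι ≃ {c : HierarchyNode F // ((hasse (HierarchyNode F)).neighborSet c).ncard ≤ 1} :=
  .ofBijective (fun i ↦ ⟨hF.leaf i, hF.ncard_neighborSet_leaf_le_one i⟩)
    ⟨fun _ _ h ↦ hF.leaf_injective (congrArg Subtype.val h),
      fun c ↦ (hF.exists_leaf_eq c.2).imp fun _ h ↦ Subtype.ext h⟩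

end IsBinaryHierarchy

end HierarchyTree

section BranchWidth

variable {V : Type u} {G : SimpleGraph V}

/-- The boundary of an edge set `X`: the vertices incident both to an edge in `X` and to an edge
outside `X`. -/
def boundary (X : Set G.edgeSet) : Set V :=
  {v | (∃ e ∈ X, v ∈ (e : Sym2 V)) ∧ ∃ e ∉ X, v ∈ (e : Sym2 V)}

lemma boundary_compl (X : Set G.edgeSet) : boundary Xᶜ = boundary X := by
  ext v
  simp only [boundary, Set.mem_compl_iff, not_not, Set.mem_ofPred_eq]
  exact and_comm

namespace BranchDecomp

variable (B : BranchDecomp G) {a b : B.t}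

lemma side_swap (hab : B.T.Adj a b) : B.side b a = (B.side a b)ᶜ := by
  ext e
  have hbridge := isBridge_iff.1 (isAcyclic_iff_forall_adj_isBridge.1 B.isTree.isAcyclic hab)
  simp only [side, Sym2.eq_swap (a := b), Set.mem_ofPred_eq, Set.mem_compl_iff]
  exact ⟨fun hb ha ↦ hbridge (ha.trans hb.symm),
    (reachable_deleteEdges_or_of_reachable (B.isTree.connected.preconnected _ _)).resolve_left⟩

lemma bdry_swap (hab : B.T.Adj a b) : B.bdry b a = B.bdry a b := by
  have bdry_eq (a b : B.t) : B.bdry a b = boundary (B.side a b) := rfl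
  rw [bdry_eq, B.side_swap hab, boundary_compl, bdry_eq]

lemma width_le {k : ℕ} (h : ∀ ⦃a b⦄, B.T.Adj a b → (B.bdry a b).ncard ≤ k) : B.width ≤ k :=
  csSup_le' fun _ ⟨_, _, hab, hn⟩ ↦ hn.trans_le (h hab)

lemma ncard_bdry_le_width (hab : B.T.Adj a b) : (B.bdry a b).ncard ≤ B.width := by
  have := B.fin
  refine le_csSup (Set.Finite.bddAbove ?_) ⟨a, b, hab, rfl⟩
  refine (Set.finite_range fun p : B.t × B.t ↦ (B.bdry p.1 p.2).ncard).subset ?_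
  rintro _ ⟨a, b, -, rfl⟩
  exact ⟨(a, b), rfl⟩

end BranchDecomp

lemma branchwidth_le_width (B : BranchDecomp G) : branchwidth G ≤ B.width :=
  Nat.sInf_le ⟨B, rfl⟩

lemma exists_width_eq_branchwidth [h : Nonempty (BranchDecomp G)] :
    ∃ B : BranchDecomp G, B.width = branchwidth G :=
  Nat.sInf_mem (s := {n | ∃ B : BranchDecomp G, B.width = n}) (h.elim fun B ↦ ⟨_, B, rfl⟩)

namespace IsBinaryHierarchy

variable {ι : Type} [DecidableEq ι] [Fintype ι] {F : Set (Finset ι)} {i₀ : ι}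

/-- The branch-decomposition obtained from a binary hierarchy on all edges but one. -/
noncomputable def branchDecomp (hF : IsBinaryHierarchy F (Finset.univ.erase i₀))
    (ε : G.edgeSet ≃ ι) : BranchDecomp G where
  t := HierarchyNode F
  fin := Fintype.ofFinite _
  T := hasse (HierarchyNode F)
  isTree := hasse_isTree hF.isChain_Ici
  ternary := hF.ncard_neighborSet_le_one_or_eq_three
  τ := ε.trans hF.leafEquiv

variable (hF : IsBinaryHierarchy F (Finset.univ.erase i₀)) (ε : G.edgeSet ≃ ι)

lemma side_branchDecomp {a b : HierarchyNode F} (hab : a ⋖ b) :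
    (hF.branchDecomp ε).side a b = {e | ε e ∈ a.1} := by
  ext e
  exact (hasse_reachable_deleteEdges_iff hF.isChain_Ici hab).trans hF.leaf_le_iff

lemma width_branchDecomp_le {k : ℕ}
    (h : ∀ A ∈ F, (boundary {e | ε e ∈ A}).ncard ≤ k) : (hF.branchDecomp ε).width ≤ k := by
  have bdry_le {a b : HierarchyNode F} (hab : a ⋖ b) :
      ((hF.branchDecomp ε).bdry a b).ncard ≤ k := by
    change (boundary ((hF.branchDecomp ε).side a b)).ncard ≤ k
    rw [hF.side_branchDecomp ε hab]
    exact h _ (HierarchyNode.mem_of_ne_top hab.lt.ne_top)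
  refine BranchDecomp.width_le _ fun a b hab ↦ hab.elim bdry_le fun hba ↦ ?_
  rw [← (hF.branchDecomp ε).bdry_swap hab]
  exact bdry_le hba

end IsBinaryHierarchy

end BranchWidth

section Displays

variable {t ι : Type*} {T : SimpleGraph t} {α : ι → t} {x y : t} {S A : Finset ι} {i j : ι}

/-- The vertex `x` displays the set `S` of indices, placed in `T` by `α`, if `x` separates
everything in `S` from everything outside `S`. -/
def Displays (T : SimpleGraph t) (α : ι → t) (x : t) (S : Finset ι) : Prop :=
  ∀ i ∈ S, ∀ j ∉ S, Separates T x (α i) (α j)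

namespace Displays

lemma singleton (T : SimpleGraph t) (α : ι → t) (i : ι) : Displays T α (α i) {i} := by
  intro j hj k _
  rw [Finset.mem_singleton.1 hj]
  exact Separates.left T _ _

lemma compl [Fintype ι] [DecidableEq ι] (h : Displays T α x S) : Displays T α x Sᶜ :=
  fun i hi j hj ↦ (h j (by simpa using hj) i (Finset.mem_compl.1 hi)).symm

lemma sdiff [DecidableEq ι] (hS : Displays T α x S) (hA : Displays T α x A) :
    Displays T α x (S \ A) := by
  intro i hi j hj
  rw [Finset.mem_sdiff] at hi hj
  by_cases hjS : j ∈ S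
  · exact (hA j (by tauto) i hi.2).symm
  · exact hS i hi.1 j hjS

lemma of_not_reachable_deleteEdges (hS : Displays T α x S)
    (h : ∀ i ∈ S, ¬ (T.deleteEdges {s(x, y)}).Reachable x (α i)) : Displays T α y S :=
  fun i hi j hj ↦ (hS i hi j hj).of_not_reachable_deleteEdges (h i hi)

variable [DecidableEq ι]

lemma exists_split_of_separates (hS : Displays T α x S) (hi : i ∈ S) (hj : j ∈ S) (hij : i ≠ j)
    (hsep : Separates T x (α i) (α j)) :
    ∃ A B, A.Nonempty ∧ B.Nonempty ∧ Disjoint A B ∧ A ∪ B = S ∧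
      Displays T α x A ∧ Displays T α x B := by
  classical
  let A := S.filter fun k ↦ k = i ∨ ¬ Separates T x (α i) (α k)
  have hA : Displays T α x A := by
    intro k hk l hl
    obtain ⟨hkS, hk⟩ := Finset.mem_filter.1 hk
    by_cases hlS : l ∈ S
    · have hil : Separates T x (α i) (α l) := by
        by_contra h
        exact hl (Finset.mem_filter.2 ⟨hlS, .inr h⟩)
      obtain rfl | hik := hk
      exacts [hil, hil.of_separates_of_not_separates hik]
    · exact hS k hkS l hlS
  refine ⟨A, S \ A, ⟨i, by simp [A, hi]⟩, ⟨j, by simp [A, hj, hij.symm, hsep]⟩,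
    Finset.disjoint_sdiff, Finset.union_sdiff_of_subset (Finset.filter_subset _ _), hA, hS.sdiff hA⟩

/-- Walk from `x` towards a fixed member of `S` until the current vertex separates it from another
member of `S`. Up to that point all of `S` stays on the far side of the edge to be traversed, so the
next vertex displays `S` again. -/
lemma exists_split (hT : T.IsTree) (hS : Displays T α x S) (hS₂ : S.Nontrivial) :
    ∃ y A B, A.Nonempty ∧ B.Nonempty ∧ Disjoint A B ∧ A ∪ B = S ∧
      Displays T α y A ∧ Displays T α y B := by
  obtain ⟨i, hi⟩ := hS₂.nonempty
  induction hn : T.dist x (α i) using Nat.strong_induction_on generalizing x with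
  | h n ih =>
    by_cases hsep : ∃ j ∈ S, j ≠ i ∧ Separates T x (α i) (α j)
    · obtain ⟨j, hj, hji, hij⟩ := hsep
      exact ⟨x, hS.exists_split_of_separates hi hj hji.symm hij⟩
    · push Not at hsep
      obtain ⟨j, hj, hji⟩ := hS₂.exists_ne i
      have hxi : x ≠ α i := by
        rintro rfl
        exact hsep j hj hji (Separates.left T _ _)
      obtain ⟨y, -, hlt, hxy⟩ := exists_adj_dist_lt hT hxi
      refine ih _ (hn ▸ hlt) (hS.of_not_reachable_deleteEdges fun k hk hxk ↦ ?_) rfl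
      obtain rfl | hki := eq_or_ne k i
      · exact hxy hxk
      · exact hxy (hxk.trans (Separates.reachable_deleteEdges_of_not (hsep k hk hki) y).symm)

end Displays

end Displays

section LowerBound

variable {V : Type u} {G : SimpleGraph V}

namespace TreeDecomp

variable (D : TreeDecomp G)

lemma width_le {k : ℕ} (h : ∀ x, (D.β x).ncard ≤ k + 1) : D.width ≤ k :=
  csSup_le' fun n ⟨x, hx⟩ ↦ by have := h x; omega

lemma ncard_bag_le (x : D.t) : (D.β x).ncard ≤ D.width + 1 := by
  have := D.fin
  obtain h | h := Nat.eq_zero_or_pos (D.β x).ncard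
  · omega
  · refine Nat.le_add_of_sub_le (le_csSup (Set.Finite.bddAbove ?_) ⟨x, by omega⟩)
    refine (Set.finite_range fun y ↦ (D.β y).ncard - 1).subset ?_
    rintro n ⟨y, hy⟩
    exact ⟨y, by dsimp only; omega⟩

lemma exists_subset_bag (e : G.edgeSet) : ∃ x, ∀ v ∈ (e : Sym2 V), v ∈ D.β x := by
  obtain ⟨⟨a, b⟩, hab⟩ := e
  obtain ⟨x, ha, hb⟩ := D.covers_edge hab
  refine ⟨x, fun v hv ↦ ?_⟩
  obtain rfl | rfl := Sym2.mem_iff.1 hv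
  exacts [ha, hb]

lemma boundary_subset_bag {x : D.t} {α : G.edgeSet → D.t}
    (hα : ∀ e : G.edgeSet, ∀ v ∈ (e : Sym2 V), v ∈ D.β (α e)) {X : Set G.edgeSet}
    (hX : ∀ e ∈ X, ∀ f ∉ X, Separates D.T x (α e) (α f)) : boundary X ⊆ D.β x := by
  rintro v ⟨⟨e, heX, hve⟩, f, hfX, hvf⟩
  exact (hX e heX f hfX).mem_of_preconnected_induce (D.subtree v).preconnected
    (hα e v hve) (hα f v hvf)

theorem exists_branchDecomp_width_le [Finite V] [Nonempty G.edgeSet] :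
    ∃ B : BranchDecomp G, B.width ≤ D.width + 1 := by
  choose α hα using D.exists_subset_bag
  let ε := Finite.equivFin G.edgeSet
  let e₀ := Classical.arbitrary G.edgeSet
  let P (A : Finset (Fin (Nat.card G.edgeSet))) : Prop := ∃ x, Displays D.T (α ∘ ε.symm) x A
  have hroot : P (Finset.univ.erase (ε e₀)) :=
    ⟨_, by simpa only [Finset.compl_singleton] using (Displays.singleton _ _ (ε e₀)).compl⟩
  obtain ⟨F, hF, hFP⟩ := exists_isBinaryHierarchy (P := P) (fun S ⟨x, hS⟩ hS₂ ↦ by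
    obtain ⟨y, A, B, hA₀, hB₀, hAB, hu, hA, hB⟩ := hS.exists_split D.isTree hS₂
    exact ⟨A, B, hA₀, hB₀, hAB, hu, ⟨y, hA⟩, ⟨y, hB⟩⟩) hroot
  refine ⟨hF.branchDecomp ε, hF.width_branchDecomp_le ε fun A hA ↦ ?_⟩
  obtain ⟨x, hx⟩ := hFP A hA
  have hsub : boundary {e | ε e ∈ A} ⊆ D.β x :=
    D.boundary_subset_bag hα fun e he f hf ↦ by
      simpa only [Function.comp_apply, Equiv.symm_apply_apply] using hx (ε e) he (ε f) hf
  exact (Set.ncard_le_ncard hsub (Set.toFinite _)).trans (D.ncard_bag_le x)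

end TreeDecomp

lemma treewidth_le_width (D : TreeDecomp G) : treewidth G ≤ D.width :=
  Nat.sInf_le ⟨D, rfl⟩

instance : Nonempty (TreeDecomp G) :=
  ⟨{ t := Unit
     fin := inferInstance
     T := ⊥
     isTree := .of_subsingleton
     β := fun _ ↦ Set.univ
     covers_edge := fun _ _ _ ↦ ⟨(), trivial, trivial⟩
     covers_vert := fun _ ↦ ⟨(), trivial⟩
     subtree := fun _ ↦ { preconnected := .of_subsingleton, nonempty := ⟨⟨(), trivial⟩⟩ } }⟩

lemma exists_width_eq_treewidth (G : SimpleGraph V) : ∃ D : TreeDecomp G, D.width = treewidth G :=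
  Nat.sInf_mem (s := {n | ∃ D : TreeDecomp G, D.width = n})
    ((inferInstance : Nonempty (TreeDecomp G)).elim fun D ↦ ⟨_, D, rfl⟩)

theorem branchwidth_le_treewidth_add_one [Finite V] [Nonempty G.edgeSet] :
    branchwidth G ≤ treewidth G + 1 := by
  obtain ⟨D, hD⟩ := exists_width_eq_treewidth G
  obtain ⟨B, hB⟩ := D.exists_branchDecomp_width_le
  exact hD ▸ (branchwidth_le_width B).trans hB

end LowerBound

section PartialTreeDecomp

lemma isAcyclic_map {t t' : Type*} {T : SimpleGraph t} (hT : T.IsAcyclic) (f : t ↪ t') :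
    (T.map f).IsAcyclic := by
  refine isAcyclic_iff_forall_adj_isBridge.2 ?_
  rintro _ _ ⟨-, a, b, hab, rfl, rfl⟩
  have : Nonempty t := ⟨a⟩
  let retract : (T.map f).deleteEdges {s(f a, f b)} →g T.deleteEdges {s(a, b)} :=
    { toFun := Function.invFun f
      map_rel' := by
        intro _ _ h
        obtain ⟨⟨-, c, d, hcd, rfl, rfl⟩, hne⟩ := deleteEdges_adj.1 h
        rw [Function.leftInverse_invFun f.injective c, Function.leftInverse_invFun f.injective d]
        refine deleteEdges_adj.2 ⟨hcd, fun heq ↦ hne ?_⟩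
        simpa using congrArg (Sym2.map f) (heq : s(c, d) = s(a, b)) }
  have hretract (c : t) : retract (f c) = c := Function.leftInverse_invFun f.injective c
  intro h
  refine isBridge_iff.1 (isAcyclic_iff_forall_adj_isBridge.1 hT hab) ?_
  simpa only [hretract] using h.map retract

lemma connected_induce_image {t t' : Type*} {T : SimpleGraph t} {T' : SimpleGraph t'} (f : T →g T')
    {s : Set t} (hs : (T.induce s).Connected) : (T'.induce (f '' s)).Connected :=
  hs.map (induceHom f (Set.mapsTo_image f s)) fun ⟨_, x, hx, h⟩ ↦ ⟨⟨x, hx⟩, Subtype.ext h⟩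

/-- Every vertex in no bag gets a singleton bag of its own, and its node is attached to `T` by
extending `T` to a spanning tree of the complete graph. -/
theorem exists_treeDecomp_width_le {V : Type u} [Finite V] {G : SimpleGraph V} {t : Type} [Finite t]
    {T : SimpleGraph t} (hT : T.IsTree) {β : t → Set V}
    (covers_edge : ∀ ⦃u v⦄, G.Adj u v → ∃ x, u ∈ β x ∧ v ∈ β x)
    (subtree : ∀ v, (T.induce {x | v ∈ β x}).Preconnected) {k : ℕ}
    (hk : ∀ x, (β x).ncard ≤ k + 1) : ∃ D : TreeDecomp G, D.width ≤ k := by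
  let U : Set V := {v | ∀ x, v ∉ β x}
  let ψ := Finite.equivFin U
  let β' : t ⊕ Fin (Nat.card U) → Set V := Sum.elim β fun i ↦ {(ψ.symm i).1}
  have : Nonempty t := hT.connected.nonempty
  obtain ⟨T', hTT', -, hT'⟩ := connected_top.exists_isTree_le_of_le_of_isAcyclic le_top
    (isAcyclic_map hT.isAcyclic (Function.Embedding.inl (β := Fin (Nat.card U))))
  let inl : T →g T' := ⟨Sum.inl, fun h ↦ hTT' ⟨by simpa using h.ne, _, _, h, rfl, rfl⟩⟩
  have preimage_of_mem (v : U) : {z | v.1 ∈ β' z} = {Sum.inr (ψ v)} := by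
    ext (x | i)
    · exact iff_of_false (v.2 x) Sum.inl_ne_inr
    · change v.1 = (ψ.symm i).1 ↔ Sum.inr i = Sum.inr (ψ v)
      rw [Sum.inr.injEq, ← Subtype.ext_iff, Equiv.eq_symm_apply, eq_comm]
  have preimage_of_notMem {v : V} (hv : v ∉ U) : {z | v ∈ β' z} = inl '' {x | v ∈ β x} := by
    ext (x | i)
    · exact (Sum.inl_injective.mem_set_image (s := {x | v ∈ β x})).symm
    · refine iff_of_false (fun h ↦ hv ?_) fun ⟨_, _, h⟩ ↦ Sum.inl_ne_inr h
      exact (h : v = (ψ.symm i).1) ▸ (ψ.symm i).2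
  have connected (v : V) : (T'.induce {z | v ∈ β' z}).Connected := by
    by_cases hv : v ∈ U
    · rw [preimage_of_mem ⟨v, hv⟩]
      exact { preconnected := .of_subsingleton, nonempty := ⟨⟨_, rfl⟩⟩ }
    · rw [preimage_of_notMem hv]
      obtain ⟨x, hx⟩ := not_forall_not.1 hv
      exact connected_induce_image inl { preconnected := subtree v, nonempty := ⟨⟨x, hx⟩⟩ }
  let D : TreeDecomp G :=
    { t := t ⊕ Fin (Nat.card U)
      fin := Fintype.ofFinite _
      T := T'
      isTree := hT'
      β := β'
      covers_edge := fun u v huv ↦ (covers_edge huv).elim fun x hx ↦ ⟨.inl x, hx⟩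
      covers_vert := fun v ↦ (connected v).nonempty.elim fun x ↦ ⟨x, x.2⟩
      subtree := connected }
  refine ⟨D, D.width_le ?_⟩
  rintro (x | i)
  · exact hk x
  · exact (Set.ncard_singleton _).trans_le (Nat.le_add_left 1 k)

end PartialTreeDecomp

section UpperBound

variable {V : Type u} {G : SimpleGraph V}

namespace BranchDecomp

variable (B : BranchDecomp G) {e : G.edgeSet} {x y : B.t} {v : V}

/-- The bag of a node `x` of a branch-decomposition: the vertices `v` such that `x` lies in the
subtree spanned by the leaves of the edges at `v`. -/
def bag (x : B.t) : Set V :=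
  {v | ∃ e f : G.edgeSet, v ∈ (e : Sym2 V) ∧ v ∈ (f : Sym2 V) ∧ Separates B.T x (B.τ e) (B.τ f)}

lemma leaf_injective : Function.Injective fun e ↦ (B.τ e).1 :=
  Subtype.val_injective.comp B.τ.injective

lemma neighborSet_leaf_subsingleton (e : G.edgeSet) :
    (B.T.neighborSet (B.τ e).1).Subsingleton :=
  have := B.fin
  Set.ncard_le_one_iff_subsingleton.1 (B.τ e).2

lemma mem_bag_leaf_iff : v ∈ B.bag (B.τ e) ↔ v ∈ (e : Sym2 V) := by
  refine ⟨?_, fun hv ↦ ⟨e, e, hv, hv, Separates.left _ _ _⟩⟩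
  rintro ⟨f, g, hf, hg, hsep⟩
  obtain h | h := hsep.eq_or_eq_of_subsingleton_neighborSet
    (B.isTree.connected.preconnected _ _) (B.neighborSet_leaf_subsingleton e)
  exacts [B.leaf_injective h ▸ hf, B.leaf_injective h ▸ hg]

lemma ncard_bag_leaf_le_two (e : G.edgeSet) : (B.bag (B.τ e)).ncard ≤ 2 := by
  have hbag : B.bag (B.τ e) = {v | v ∈ (e : Sym2 V)} := Set.ext fun _ ↦ B.mem_bag_leaf_iff
  obtain ⟨⟨a, b⟩, hab⟩ := e
  have hpair : {v | v ∈ s(a, b)} = {a, b} := by ext; simp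
  refine hbag ▸ (congrArg Set.ncard hpair).trans_le ?_
  exact (Set.ncard_insert_le a {b}).trans (by rw [Set.ncard_singleton])

lemma exists_mem_bdry_pair (hx : ∀ e, x ≠ B.τ e) (hv : v ∈ B.bag x) :
    ∃ y z, y ≠ z ∧ B.T.Adj x y ∧ B.T.Adj x z ∧ v ∈ B.bdry x y ∧ v ∈ B.bdry x z := by
  obtain ⟨e, f, he, hf, hsep⟩ := hv
  obtain ⟨y, hxy, -, hye⟩ := exists_adj_dist_lt B.isTree (hx e)
  obtain ⟨z, hxz, -, hzf⟩ := exists_adj_dist_lt B.isTree (hx f)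
  have hef := B.isTree.connected.preconnected (B.τ e).1 (B.τ f).1
  have hyf := hsep.reachable_of_not_reachable hef hye
  have hze := hsep.symm.reachable_of_not_reachable hef.symm hzf
  exact ⟨y, z, fun h ↦ hye (h ▸ hze), hxy, hxz, ⟨⟨f, hyf, hf⟩, e, hye, he⟩,
    ⟨e, hze, he⟩, f, hzf, hf⟩

lemma two_mul_ncard_bag_le [Finite V] (hx : ∀ e, x ≠ B.τ e) :
    2 * (B.bag x).ncard ≤ (B.T.neighborSet x).ncard * B.width := by
  classical
  have := B.fin
  have := Fintype.ofFinite V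
  rw [mul_comm, Set.ncard_eq_toFinset_card', Set.ncard_eq_toFinset_card']
  refine Finset.card_mul_le_card_mul (fun v y ↦ v ∈ B.bdry x y) (fun v hv ↦ ?_) fun y hy ↦ ?_
  · obtain ⟨y, z, hyz, hy, hz, hvy, hvz⟩ := B.exists_mem_bdry_pair hx (Set.mem_toFinset.1 hv)
    rw [← Finset.card_pair hyz]
    refine Finset.card_le_card (Finset.insert_subset ?_ (Finset.singleton_subset_iff.2 ?_))
    · simpa using ⟨hy, hvy⟩
    · simpa using ⟨hz, hvz⟩
  · refine le_trans ?_ (B.ncard_bdry_le_width (Set.mem_toFinset.1 hy))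
    rw [Set.ncard_eq_toFinset_card']
    exact Finset.card_le_card fun v hv ↦ by simpa using (Finset.mem_filter.1 hv).2

lemma ncard_bag_le [Finite V] (x : B.t) : (B.bag x).ncard ≤ max (3 * B.width / 2) 2 := by
  by_cases hx : ∃ e, x = B.τ e
  · obtain ⟨e, rfl⟩ := hx
    exact (B.ncard_bag_leaf_le_two e).trans (le_max_right _ _)
  · have hdeg : (B.T.neighborSet x).ncard = 3 := (B.ternary x).resolve_left fun h ↦
      hx ⟨B.τ.symm ⟨x, h⟩, by simp⟩
    have := B.two_mul_ncard_bag_le (not_exists.1 hx)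
    rw [hdeg] at this
    omega

lemma preconnected_induce_bag (v : V) : (B.T.induce {x | v ∈ B.bag x}).Preconnected := by
  have path_in_bags {e f : G.edgeSet} (he : v ∈ (e : Sym2 V)) (hf : v ∈ (f : Sym2 V)) :
      ∃ p : B.T.Walk (B.τ e) (B.τ f), p.IsPath ∧ ∀ x ∈ p.support, v ∈ B.bag x := by
    obtain ⟨p, hp⟩ := B.isTree.connected.exists_isPath (B.τ e).1 (B.τ f).1
    exact ⟨p, hp, fun x hx ↦ ⟨e, f, he, hf, .of_mem_support_of_isPath B.isTree.isAcyclic hp hx⟩⟩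
  rintro ⟨a, e, -, he, -⟩ b
  refine (induce_connected_of_patches (B.τ e).1 (B.mem_bag_leaf_iff.2 he) ?_).preconnected _ b
  rintro x ⟨f, g, hf, hg, hsep⟩
  obtain ⟨p, -, hp⟩ := path_in_bags he hf
  obtain ⟨q, -, hq⟩ := path_in_bags hf hg
  refine ⟨{y | y ∈ (p.append q).support}, fun y hy ↦ ?_, Walk.start_mem_support _,
    (Walk.mem_support_append_iff _ _).2 (.inr (hsep q)),
    (Walk.connected_induce_support _).preconnected _ _⟩
  exact ((Walk.mem_support_append_iff _ _).1 hy).elim (hp y) (hq y)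

lemma exists_bag_of_adj {u v : V} (huv : G.Adj u v) : ∃ x, u ∈ B.bag x ∧ v ∈ B.bag x :=
  ⟨B.τ ⟨s(u, v), huv⟩, B.mem_bag_leaf_iff.2 (Sym2.mem_mk_left u v),
    B.mem_bag_leaf_iff.2 (Sym2.mem_mk_right u v)⟩

lemma side_leaf (hxy : B.T.Adj (B.τ e) y) : B.side (B.τ e) y = {e} := by
  ext f
  refine ⟨fun hf ↦ ?_, fun hf ↦ hf ▸ Reachable.refl _⟩
  by_contra hne
  obtain ⟨z, hxz, -, hz⟩ := exists_adj_dist_lt B.isTree (B.leaf_injective.ne (Ne.symm hne))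
  exact hz (B.neighborSet_leaf_subsingleton e hxy hxz ▸ hf)

end BranchDecomp

theorem treewidth_add_one_le_max [Finite V] [Nonempty (BranchDecomp G)] :
    treewidth G + 1 ≤ max (3 * branchwidth G / 2) 2 := by
  obtain ⟨B, hB⟩ := exists_width_eq_branchwidth (G := G)
  have := B.fin
  obtain ⟨D, hD⟩ := exists_treeDecomp_width_le (k := max (3 * B.width / 2) 2 - 1) B.isTree
    (fun _ _ ↦ B.exists_bag_of_adj) B.preconnected_induce_bag
    (fun x ↦ (B.ncard_bag_le x).trans (by omega))
  have := treewidth_le_width D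
  omega

lemma exists_ne_edge_of_not_isBridge {e : G.edgeSet} (he : ¬ G.IsBridge e.1) {v : V}
    (hv : v ∈ e.1) : ∃ f ≠ e, v ∈ (f : Sym2 V) := by
  obtain ⟨_, hvw⟩ := e
  obtain ⟨w, rfl⟩ := hv
  obtain ⟨p⟩ := not_not.1 (isBridge_iff.not.1 he)
  obtain ⟨x, hx, -, -⟩ := Walk.exists_eq_cons_of_ne (Adj.ne hvw) p
  obtain ⟨hvx, hne⟩ := deleteEdges_adj.1 hx
  exact ⟨⟨s(v, x), hvx⟩, fun h ↦ hne (congrArg Subtype.val h), Sym2.mem_mk_left v x⟩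

lemma BranchDecomp.two_le_width [Finite V] (B : BranchDecomp G) (hG : ¬ G.IsAcyclic) :
    2 ≤ B.width := by
  rw [isAcyclic_iff_forall_adj_isBridge] at hG
  push Not at hG
  obtain ⟨u, v, huv, hbridge⟩ := hG
  let e : G.edgeSet := ⟨s(u, v), huv⟩
  obtain ⟨f, hfe, -⟩ := exists_ne_edge_of_not_isBridge (e := e) hbridge (Sym2.mem_mk_left u v)
  obtain ⟨y, hy, -⟩ := exists_adj_dist_lt B.isTree (B.leaf_injective.ne hfe.symm)
  have mem_bdry {w : V} (hw : w ∈ s(u, v)) : w ∈ B.bdry (B.τ e) y := by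
    obtain ⟨g, hge, hwg⟩ := exists_ne_edge_of_not_isBridge (e := e) hbridge hw
    simp only [bdry, B.side_leaf hy]
    exact ⟨⟨e, rfl, hw⟩, g, hge, hwg⟩
  rw [← Set.ncard_pair huv.ne]
  refine (Set.ncard_le_ncard ?_ (Set.toFinite _)).trans (B.ncard_bdry_le_width hy)
  exact Set.pair_subset (mem_bdry (Sym2.mem_mk_left u v)) (mem_bdry (Sym2.mem_mk_right u v))

end UpperBound

/-- For every non-acyclic graph `G`: `bw(G) - 1 ≤ tw(G) ≤ ⌊(3/2)·bw(G)⌋ - 1`. -/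
theorem branchwidth_treewidth_relation {V : Type u} [Fintype V] (G : SimpleGraph V)
    (hG : ¬ G.IsAcyclic) :
    branchwidth G - 1 ≤ treewidth G ∧ treewidth G ≤ 3 * branchwidth G / 2 - 1 := by
  have hbot : G ≠ ⊥ := by
    rintro rfl
    exact hG isAcyclic_bot
  have : Nonempty G.edgeSet := (edgeSet_nonempty.2 hbot).to_subtype
  obtain ⟨D, -⟩ := exists_width_eq_treewidth G
  have : Nonempty (BranchDecomp G) := D.exists_branchDecomp_width_le.nonempty
  obtain ⟨B, hB⟩ := exists_width_eq_branchwidth (G := G)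
  have lower : branchwidth G ≤ treewidth G + 1 := branchwidth_le_treewidth_add_one
  have upper : treewidth G + 1 ≤ max (3 * branchwidth G / 2) 2 := treewidth_add_one_le_max
  have two_le : 2 ≤ branchwidth G := hB ▸ B.two_le_width hG
  omega
end

section
/- Let H be an apex graph on t vertices (there exists v ∈ V(H) with H - v planar). Every H-minor-free graph G of radius at most r has treewidth O(t^4·r + t^{2304}), assuming the linear grid-minor bound tw(G') = O(t^2·k) + O(t^{2304}) for H-minor-free graphs G' excluding the (k×k)-grid minor. -/
open SimpleGraph Set

universe u

/-- A combinatorial closed surface presented as a flag system ("graph-encoded map"):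
three fixed-point-free involutions on a finite set of flags, with `σ₀` and `σ₂`
commuting and `σ₀σ₂` fixed-point free. Vertices, edges, faces of the map are the orbits
of `⟨σ₁,σ₂⟩`, `⟨σ₀,σ₂⟩`, `⟨σ₀,σ₁⟩` respectively. -/
structure FlagSystem : Type 1 where
  F : Type
  fin : Fintype F
  σ₀ : Equiv.Perm F
  σ₁ : Equiv.Perm F
  σ₂ : Equiv.Perm F
  inv₀ : σ₀ * σ₀ = 1
  inv₁ : σ₁ * σ₁ = 1
  inv₂ : σ₂ * σ₂ = 1
  fpf₀ : ∀ x, σ₀ x ≠ x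
  fpf₁ : ∀ x, σ₁ x ≠ x
  fpf₂ : ∀ x, σ₂ x ≠ x
  comm02 : σ₀ * σ₂ = σ₂ * σ₀
  fpf02 : ∀ x, (σ₀ * σ₂) x ≠ x

namespace FlagSystem

variable (M : FlagSystem)

/-- Two flags lie in a common orbit of the subgroup generated by a set of permutations. -/
def SameOrbit (S : Set (Equiv.Perm M.F)) (x y : M.F) : Prop :=
  ∃ g ∈ Subgroup.closure S, g x = y

/-- The number of orbits of the subgroup generated by `S` on the flags. -/
noncomputable def numOrbits (S : Set (Equiv.Perm M.F)) : ℕ :=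
  Nat.card (Quotient (MulAction.orbitRel (Subgroup.closure S) M.F))

/-- Number of vertices of the map. -/
noncomputable def nV : ℕ := M.numOrbits {M.σ₁, M.σ₂}
/-- Number of edges of the map. -/
noncomputable def nE : ℕ := M.numOrbits {M.σ₀, M.σ₂}
/-- Number of faces of the map. -/
noncomputable def nF : ℕ := M.numOrbits {M.σ₀, M.σ₁}
/-- Number of connected components of the map (= of the underlying surface). -/
noncomputable def nC : ℕ := M.numOrbits {M.σ₀, M.σ₁, M.σ₂}

/-- The flag system `M` is (the flag system of) a 2-cell embedding of the graph `G`: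
there are assignments of a (non-isolated) vertex and an edge of `G` to each flag which
identify the vertex orbits with the non-isolated vertices of `G` and the edge orbits
with the edges of `G`, respecting all incidences. -/
def Realizes {V : Type u} (G : SimpleGraph V) : Prop :=
  ∃ (fv : M.F → {v : V // ∃ e ∈ G.edgeSet, v ∈ e}) (fe : M.F → G.edgeSet),
    (∀ x, ((fv x : V) ∈ (fe x : Sym2 V))) ∧
    (∀ x, fv (M.σ₁ x) = fv x) ∧ (∀ x, fv (M.σ₂ x) = fv x) ∧
    (∀ x, fv (M.σ₀ x) ≠ fv x) ∧
    (∀ x, fe (M.σ₀ x) = fe x) ∧ (∀ x, fe (M.σ₂ x) = fe x) ∧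
    (∀ x y, fv x = fv y → M.SameOrbit {M.σ₁, M.σ₂} x y) ∧
    (∀ x y, fe x = fe y → M.SameOrbit {M.σ₀, M.σ₂} x y) ∧
    Function.Surjective fv ∧
    (∀ (e : G.edgeSet) (v : V), v ∈ (e : Sym2 V) → ∃ x, fe x = e ∧ (fv x : V) = v)

end FlagSystem

/-- The Euler genus of a graph `G`: the least `g` such that some 2-cell embedding of `G`
(given by a flag system `M` realizing `G`) satisfies the Euler formula
`g + v + f = 2·c + e`, i.e. `g = 2c - v + e - f`. -/
noncomputable def eulerGenus {V : Type u} (G : SimpleGraph V) : ℕ :=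
  sInf {g | ∃ M : FlagSystem, M.Realizes G ∧ g + M.nV + M.nF = 2 * M.nC + M.nE}

/-!
Deleting the apex `a` from `H` leaves a graph `H - a` realized by a map with
`V + F = 2 C + E`. Choose a spanning ribbon subgraph `T` with one boundary circle on each
component (a quasi-tree). Adding an edge to `T`, or removing one, changes the number of boundary
circles by at most one, and the Euler equality forces every addition to increase it, as well as
every removal. Hence, when the flags are listed as they appear along the boundary of `T`, the pairs
matched by `σ₀` do not cross and neither do the pairs matched by `σ₂`, while flags matched by `σ₁`
are neighbours. Drawing the first pairs as arches above a line and the second ones below it gives a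
model of `H - a` in a square grid of side `m = O(t ^ 4)`.

Now let `G` be a graph of radius at most `r` with a large grid minor. For each of the `n = t - 1`
vertices of `H - a` and each coordinate, leave room in the model for one of `1 + n (r + 1)` parallel
lines. Shortest paths from the centre of `G` to the `n` branch sets chosen below form a connected
set of at most `1 + n (r + 1)` vertices, so the lines can be chosen to avoid all the branch sets
they meet. The paths, together with cells of the grid that they reach, are the branch set of `a`.
-/

/-! ### Connected sets and minor models -/

theorem connected_induce_iUnion {ι V : Type*} {K : SimpleGraph ι} {G : SimpleGraph V}
    {s : ι → Set V} (hK : K.Connected) (hs : ∀ i, (G.induce (s i)).Connected)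
    (hadj : ∀ i j, K.Adj i j → (G.induce (s i ∪ s j)).Connected) :
    (G.induce (⋃ i, s i)).Connected := by
  have along_walk {i j : ι} (p : K.Walk i j) :
      (G.induce (⋃ k ∈ p.support, s k)).Connected := by
    induction p with
    | @nil i =>
      have hnil : ⋃ k ∈ (Walk.nil : K.Walk i i).support, s k = s i := by simp
      rw [hnil]
      exact hs i
    | @cons i j l h p ih =>
      have hj : s j ⊆ ⋃ k ∈ p.support, s k :=
        subset_biUnion_of_mem (u := s) p.start_mem_support
      have hunion : ⋃ k ∈ (Walk.cons h p).support, s k =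
          (s i ∪ s j) ∪ ⋃ k ∈ p.support, s k := by
        rw [union_assoc, union_eq_self_of_subset_left hj]
        simp
      obtain ⟨x, hx⟩ := nonempty_coe_sort.1 (hs j).nonempty
      rw [hunion]
      exact induce_union_connected (hadj i j h).preconnected ih.preconnected
        ⟨x, Or.inr hx, hj hx⟩
  obtain ⟨i⟩ := hK.nonempty
  obtain ⟨x, hx⟩ := nonempty_coe_sort.1 (hs i).nonempty
  refine induce_connected_of_patches x (mem_iUnion_of_mem i hx) fun {y} hy => ?_
  obtain ⟨j, hj⟩ := mem_iUnion.1 hy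
  obtain ⟨p⟩ := hK.preconnected i j
  exact ⟨_, iUnion₂_subset fun k _ => subset_iUnion s k,
    mem_biUnion p.start_mem_support hx, mem_biUnion p.end_mem_support hj,
    (along_walk p).preconnected _ _⟩

theorem connected_induce_union_iUnion {ι V : Type*} {G : SimpleGraph V} {t : Set V}
    {s : ι → Set V} (ht : (G.induce t).Connected) (hs : ∀ i, (G.induce (s i)).Connected)
    (hmeet : ∀ i, (t ∩ s i).Nonempty) : (G.induce (t ∪ ⋃ i, s i)).Connected := by
  obtain ⟨x, hx⟩ := nonempty_coe_sort.1 ht.nonempty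
  refine induce_connected_of_patches x (Or.inl hx) fun {y} hy => ?_
  rcases hy with hy | hy
  · exact ⟨t, subset_union_left, hx, hy, ht.preconnected _ _⟩
  · obtain ⟨i, hi⟩ := mem_iUnion.1 hy
    have hpatch := induce_union_connected ht.preconnected (hs i).preconnected (hmeet i)
    exact ⟨t ∪ s i, union_subset_union_right t (subset_iUnion s i), Or.inl hx, Or.inr hi,
      hpatch.preconnected _ _⟩

namespace IsMinorModel

variable {V U W : Type*} {G : SimpleGraph V} {K : SimpleGraph U} {H : SimpleGraph W}

theorem connected_biUnion {ψ : U → Set V} (hψ : IsMinorModel G K ψ) {s : Set U}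
    (hs : (K.induce s).Connected) : (G.induce (⋃ p ∈ s, ψ p)).Connected := by
  rw [biUnion_eq_iUnion]
  refine connected_induce_iUnion hs (fun p => hψ.1 p) fun p q hpq => ?_
  obtain ⟨x, hx, y, hy, hxy⟩ := hψ.2.2 hpq
  exact connected_induce_union (hψ.1 p).preconnected (hψ.1 q).preconnected hx hy hxy

theorem disjoint_biUnion {ψ : U → Set V} (hψ : IsMinorModel G K ψ) {s t : Set U}
    (hst : Disjoint s t) : Disjoint (⋃ p ∈ s, ψ p) (⋃ p ∈ t, ψ p) := by
  simp only [disjoint_iUnion_left, disjoint_iUnion_right]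
  exact fun q hq p hp => hψ.2.1 (hst.ne_of_mem hp hq)

theorem comp {ψ : U → Set V} {φ : W → Set U} (hψ : IsMinorModel G K ψ)
    (hφ : IsMinorModel K H φ) : IsMinorModel G H fun w => ⋃ p ∈ φ w, ψ p := by
  refine ⟨fun w => hψ.connected_biUnion (hφ.1 w), fun v w hvw =>
    hψ.disjoint_biUnion (hφ.2.1 hvw), fun v w hvw => ?_⟩
  obtain ⟨p, hp, q, hq, hpq⟩ := hφ.2.2 hvw
  obtain ⟨x, hx, y, hy, hxy⟩ := hψ.2.2 hpq
  exact ⟨x, mem_biUnion hp hx, y, mem_biUnion hq hy, hxy⟩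

theorem comap {φ : W → Set V} (hφ : IsMinorModel G H φ) (e : K ↪g G)
    (he : ∀ w, φ w ⊆ range e) : IsMinorModel K H fun w => e ⁻¹' φ w := by
  refine ⟨fun w => ?_, fun v w hvw => (hφ.2.1 hvw).preimage e, fun v w hvw => ?_⟩
  · have himage : φ w = e '' (e ⁻¹' φ w) := (image_preimage_eq_of_subset (he w)).symm
    have hconn := hφ.1 w
    rw [himage] at hconn
    exact (Iso.connected_iff ⟨Equiv.Set.image e _ e.injective, e.map_adj_iff⟩).2 hconn
  · obtain ⟨x, hx, y, hy, hxy⟩ := hφ.2.2 hvw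
    obtain ⟨p, rfl⟩ := he v hx
    obtain ⟨q, rfl⟩ := he w hy
    exact ⟨p, hx, q, hy, e.map_adj_iff.1 hxy⟩

end IsMinorModel

/-- The graph obtained from `H`, sitting on `Sum.inl`, by attaching a pendant vertex `Sum.inr w`
to every vertex `w`. A model of it reserves, next to each branch set of `H`, a set through which
a further vertex can be made adjacent to that branch set. -/
def withPendants {W : Type*} (H : SimpleGraph W) : SimpleGraph (W ⊕ W) where
  Adj
    | .inl v, .inl w => H.Adj v w
    | .inl v, .inr w => v = w
    | .inr v, .inl w => v = w
    | .inr _, .inr _ => False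
  symm := ⟨by
    rintro (v | v) (w | w) h
    exacts [SimpleGraph.Adj.symm h, Eq.symm h, Eq.symm h, h]⟩
  loopless := ⟨by
    rintro (v | v) h
    exacts [SimpleGraph.irrefl H h, h]⟩

theorem IsMinorModel.addPendants {V W : Type*} {G : SimpleGraph V} {H : SimpleGraph W}
    {φ D : W → Set V} (hφ : IsMinorModel G H φ) (hD : ∀ w, (G.induce (D w)).Connected)
    (hDD : Pairwise fun v w => Disjoint (D v) (D w)) (hφD : ∀ v w, Disjoint (φ v) (D w))
    (hadj : ∀ w, ∃ x ∈ φ w, ∃ y ∈ D w, G.Adj x y) :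
    IsMinorModel G (withPendants H) (Sum.elim φ D) := by
  refine ⟨?_, ?_, ?_⟩
  · rintro (w | w)
    exacts [hφ.1 w, hD w]
  · rintro (v | v) (w | w) hvw
    exacts [hφ.2.1 (ne_of_apply_ne _ hvw), hφD v w, (hφD w v).symm, hDD (ne_of_apply_ne _ hvw)]
  · rintro (v | v) (w | w) hvw
    · exact hφ.2.2 hvw
    · obtain rfl : v = w := hvw
      exact hadj v
    · obtain rfl : v = w := hvw
      obtain ⟨x, hx, y, hy, hxy⟩ := hadj v
      exact ⟨y, hy, x, hx, hxy.symm⟩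
    · exact hvw.elim

theorem IsMinorModel.hasMinor_of_withPendants {V W : Type*} {G : SimpleGraph V}
    {H : SimpleGraph W} {a : W} {μ : {u | u ≠ a} ⊕ {u | u ≠ a} → Set V}
    (hμ : IsMinorModel G (withPendants (H.induce {u | u ≠ a})) μ) {T : Set V}
    (hT : (G.induce T).Connected) (hmeet : ∀ w, (T ∩ μ (.inr w)).Nonempty)
    (hdisj : ∀ w, Disjoint T (μ (.inl w))) : HasMinor G H := by
  classical
  set A : Set V := T ∪ ⋃ w, μ (.inr w)
  have hA : (G.induce A).Connected := connected_induce_union_iUnion hT (fun w => hμ.1 _) hmeet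
  have hAdisj (w) : Disjoint A (μ (.inl w)) :=
    disjoint_union_left.2 ⟨hdisj w, disjoint_iUnion_left.2 fun v => hμ.2.1 Sum.inr_ne_inl⟩
  have hAadj (w) : ∃ x ∈ A, ∃ y ∈ μ (.inl w), G.Adj x y := by
    obtain ⟨x, hx, y, hy, hxy⟩ := hμ.2.2 (w₁ := .inr w) (w₂ := .inl w) rfl
    exact ⟨x, Or.inr (mem_iUnion_of_mem w hx), y, hy, hxy⟩
  let β (w : W) : Set V := if h : w = a then A else μ (.inl ⟨w, h⟩)
  have hβ : β a = A := dif_pos rfl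
  have hβ_ne {w : W} (h : w ≠ a) : β w = μ (.inl ⟨w, h⟩) := dif_neg h
  refine ⟨β, fun w => ?_, fun v w hvw => ?_, fun v w hvw => ?_⟩
  · rcases eq_or_ne w a with rfl | hw
    · rwa [hβ]
    · rw [hβ_ne hw]
      exact hμ.1 _
  · rcases eq_or_ne v a with rfl | hv
    · rw [hβ, hβ_ne hvw.symm]
      exact hAdisj _
    rcases eq_or_ne w a with rfl | hw
    · rw [hβ, hβ_ne hv]
      exact (hAdisj _).symm
    · rw [hβ_ne hv, hβ_ne hw]
      exact hμ.2.1 fun h => hvw (congrArg Subtype.val (Sum.inl_injective h))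
  · rcases eq_or_ne v a with rfl | hv
    · rw [hβ, hβ_ne hvw.ne']
      exact hAadj _
    rcases eq_or_ne w a with rfl | hw
    · rw [hβ, hβ_ne hv]
      obtain ⟨x, hx, y, hy, hxy⟩ := hAadj ⟨v, hv⟩
      exact ⟨y, hy, x, hx, hxy.symm⟩
    · rw [hβ_ne hv, hβ_ne hw]
      exact hμ.2.2 (w₁ := .inl ⟨v, hv⟩) (w₂ := .inl ⟨w, hw⟩) hvw

/-! ### Grids -/

theorem connected_induce_hasse_nat {s : Set ℕ} [s.OrdConnected] (hs : s.Nonempty) :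
    ((hasse ℕ).induce s).Connected := by
  have : Nonempty s := hs.to_subtype
  have reach (a b : ℕ) (hab : a ≤ b) (ha : a ∈ s) (hb : b ∈ s) :
      ((hasse ℕ).induce s).Reachable ⟨a, ha⟩ ⟨b, hb⟩ := by
    induction b, hab using Nat.le_induction with
    | base => rfl
    | succ b hab ih =>
      have hb' : b ∈ s := Set.OrdConnected.out ‹_› ha hb ⟨hab, b.le_succ⟩
      have hstep : ((hasse ℕ).induce s).Adj ⟨b, hb'⟩ ⟨b + 1, hb⟩ := Or.inl (Order.covBy_add_one b)
      exact (ih hb').trans hstep.reachable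
  refine ⟨fun a b => ?_⟩
  rcases le_total a.1 b.1 with h | h
  exacts [reach _ _ h _ _, (reach _ _ h _ _).symm]

/-- The infinite grid on the quarter-plane `ℕ × ℕ`, in which finite grids are boxes. -/
def quarterGrid : SimpleGraph (ℕ × ℕ) := hasse ℕ □ hasse ℕ

theorem quarterGrid_adj {p q : ℕ × ℕ} :
    quarterGrid.Adj p q ↔ (p.1 + 1 = q.1 ∨ q.1 + 1 = p.1) ∧ p.2 = q.2 ∨
      (p.2 + 1 = q.2 ∨ q.2 + 1 = p.2) ∧ p.1 = q.1 := by
  simp only [quarterGrid, boxProd_adj, hasse_adj, Nat.covBy_iff_add_one_eq]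

theorem connected_induce_rectangle {s t : Set ℕ} [s.OrdConnected] [t.OrdConnected]
    (hs : s.Nonempty) (ht : t.Nonempty) : (quarterGrid.induce (s ×ˢ t)).Connected := by
  let e : quarterGrid.induce (s ×ˢ t) ≃g (hasse ℕ).induce s □ (hasse ℕ).induce t :=
    ⟨Equiv.Set.prod s t, by
      intro p q
      simp only [quarterGrid, boxProd_adj, Subtype.ext_iff]
      rfl⟩
  exact e.connected_iff.2
    ((connected_induce_hasse_nat hs).boxProd (connected_induce_hasse_nat ht))

/-- The `(k × k)`-grid as the box `Iio k ×ˢ Iio k` of the quarter-plane grid. -/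
def gridEmbedding (k : ℕ) : gridGraph k ↪g quarterGrid where
  toEmbedding := Fin.valEmbedding.prodMap Fin.valEmbedding
  map_rel_iff' := by
    intro p q
    simp only [quarterGrid_adj, gridGraph, fromRel_adj, Function.Embedding.coe_prodMap,
      Prod.map_fst, Prod.map_snd, Fin.valEmbedding_apply, Prod.ext_iff, Fin.ext_iff, ne_eq]
    omega

theorem range_gridEmbedding (k : ℕ) : range (gridEmbedding k) = Iio k ×ˢ Iio k := by
  change range (Prod.map _ _) = _
  rw [range_prodMap]
  congr <;> exact Fin.range_val

theorem exists_strictMono_notMem (S : Finset ℕ) (b : ℕ) :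
    ∃ h : ℕ → ℕ, StrictMono h ∧ ∀ x, h x ∉ S ∧ b ≤ h x ∧ h x ≤ b + x + S.card := by
  classical
  set p : ℕ → Prop := fun a => b + a ∉ S
  have hp : {a | p a}.Infinite := by
    have hfin : {a | b + a ∈ S}.Finite := S.finite_toSet.preimage (add_right_injective b).injOn
    exact hfin.infinite_compl
  refine ⟨fun x => b + Nat.nth p x, (Nat.nth_strictMono hp).const_add b, fun x =>
    ⟨Nat.nth_mem_of_infinite hp x, Nat.le_add_right b _, ?_⟩⟩
  have hbad : ((Finset.range (x + S.card + 1)).filter (¬ p ·)).card ≤ S.card :=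
    Finset.card_le_card_of_injOn (b + ·) (fun a ha => by simpa [p] using (Finset.mem_filter.1 ha).2)
      (add_right_injective b).injOn
  have hcount : x < Nat.count p (x + S.card + 1) := by
    have := Finset.card_filter_add_card_filter_not (s := Finset.range (x + S.card + 1)) p
    rw [Finset.card_range, ← Nat.count_eq_card_filter_range] at this
    lia
  have := Nat.nth_lt_of_lt_count hcount
  lia

-- The lines are grouped in blocks of length `m + N + 1`: a new block starts after each element
-- of `X`, and the last line of a block is the mark.
theorem exists_strictMono_avoiding (X : Finset ℕ) {m : ℕ} (hX : ∀ x ∈ X, x < m) (N : ℕ) :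
    ∃ mark : ℕ → ℕ, ∀ S : Finset ℕ, S.card ≤ N → ∃ f : ℕ → ℕ, StrictMono f ∧ (∀ x, f x ∉ S) ∧
      (∀ x ∈ X, f x < mark x ∧ mark x < f (x + 1)) ∧
      ∀ x ≤ m, f x < (X.card + 1) * (m + N + 1) := by
  let block : ℕ → ℕ := Nat.count (· ∈ X)
  refine ⟨fun x => block x * (m + N + 1) + m + N, fun S hS => ?_⟩
  choose h h_mono h_notMem h_ge h_le using
    fun j : ℕ => exists_strictMono_notMem S (j * (m + N + 1))
  have block_succ {x : ℕ} (hx : x ∈ X) : block (x + 1) = block x + 1 := by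
    simp [block, Nat.count_succ, hx]
  have block_succ_of_notMem {x : ℕ} (hx : x ∉ X) : block (x + 1) = block x := by
    simp [block, Nat.count_succ, hx]
  have block_le (x : ℕ) : block x ≤ X.card :=
    (Nat.count_eq_card_filter_range _ x).trans_le
      (Finset.card_le_card fun y hy => (Finset.mem_filter.1 hy).2)
  have hmark (x) (hx : x ∈ X) : h (block x) x < block x * (m + N + 1) + m + N ∧
      block x * (m + N + 1) + m + N < h (block (x + 1)) (x + 1) := by
    have h1 := h_le (block x) x
    have h2 := h_ge (block (x + 1)) (x + 1)
    have h3 := hX x hx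
    rw [block_succ hx, add_one_mul] at h2
    rw [block_succ hx]
    omega
  refine ⟨fun x => h (block x) x, strictMono_nat_of_lt_succ fun x => ?_,
    fun x => h_notMem _ x, hmark, fun x hx => ?_⟩
  · by_cases hx : x ∈ X
    · exact (hmark x hx).1.trans (hmark x hx).2
    · rw [block_succ_of_notMem hx]
      exact h_mono _ x.lt_succ_self
  · have h1 := h_le (block x) x
    have h2 : block x * (m + N + 1) ≤ X.card * (m + N + 1) :=
      Nat.mul_le_mul_right _ (block_le x)
    rw [add_one_mul]
    lia

section Hook

variable {f g : ℕ → ℕ}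

/-- In the subdivision of the quarter-plane into the cells cut out by the lines `f a` and `g b`,
the left and the bottom side of the cell with index `s`, without the far corners. -/
def hook (f g : ℕ → ℕ) (s : ℕ × ℕ) : Set (ℕ × ℕ) :=
  {f s.1} ×ˢ Ico (g s.2) (g (s.2 + 1)) ∪ Ico (f s.1) (f (s.1 + 1)) ×ˢ {g s.2}

/-- The interior of the cell whose left and bottom sides form `hook f g s`. -/
def openCell (f g : ℕ → ℕ) (s : ℕ × ℕ) : Set (ℕ × ℕ) :=
  Ioo (f s.1) (f (s.1 + 1)) ×ˢ Ioo (g s.2) (g (s.2 + 1))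

/-- The half-open cell containing `hook f g s` and `openCell f g s`. -/
def cell (f g : ℕ → ℕ) (s : ℕ × ℕ) : Set (ℕ × ℕ) :=
  Ico (f s.1) (f (s.1 + 1)) ×ˢ Ico (g s.2) (g (s.2 + 1))

theorem openCell_subset_cell (s : ℕ × ℕ) : openCell f g s ⊆ cell f g s :=
  prod_mono Ioo_subset_Ico_self Ioo_subset_Ico_self

theorem hook_subset_cell (hf : StrictMono f) (hg : StrictMono g) (s : ℕ × ℕ) :
    hook f g s ⊆ cell f g s :=
  union_subset (prod_mono (by simpa using hf s.1.lt_succ_self) subset_rfl)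
    (prod_mono subset_rfl (by simpa using hg s.2.lt_succ_self))

theorem disjoint_cell (hf : StrictMono f) (hg : StrictMono g) {s t : ℕ × ℕ} (hst : s ≠ t) :
    Disjoint (cell f g s) (cell f g t) := by
  refine disjoint_prod.2 ?_
  rcases Prod.ext_iff.not.1 hst |> not_and_or.1 with h | h
  · exact Or.inl (hf.monotone.pairwise_disjoint_on_Ico_succ h)
  · exact Or.inr (hg.monotone.pairwise_disjoint_on_Ico_succ h)

theorem disjoint_hook_openCell (s : ℕ × ℕ) : Disjoint (hook f g s) (openCell f g s) := by
  rw [hook, openCell, disjoint_union_left, disjoint_prod, disjoint_prod]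
  exact ⟨Or.inl (by simp), Or.inr (by simp)⟩

theorem isMinorModel_hook (hf : StrictMono f) (hg : StrictMono g) :
    IsMinorModel quarterGrid quarterGrid (hook f g) := by
  refine ⟨fun s => ?_, fun s t hst => (disjoint_cell hf hg hst).mono
    (hook_subset_cell hf hg s) (hook_subset_cell hf hg t), ?_⟩
  · have h1 := hf s.1.lt_succ_self
    have h2 := hg s.2.lt_succ_self
    exact induce_union_connected
      (connected_induce_rectangle (singleton_nonempty _) (nonempty_Ico.2 h2)).preconnected
      (connected_induce_rectangle (nonempty_Ico.2 h1) (singleton_nonempty _)).preconnected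
      ⟨(f s.1, g s.2), by simpa using h2, by simpa using h1⟩
  · have hright (a b : ℕ) : ∃ p ∈ hook f g (a, b), ∃ q ∈ hook f g (a + 1, b),
        quarterGrid.Adj p q := by
      have h1 := hf a.lt_succ_self
      have h2 := hg b.lt_succ_self
      refine ⟨(f (a + 1) - 1, g b), Or.inr ⟨⟨?_, ?_⟩, rfl⟩, (f (a + 1), g b),
        Or.inl ⟨rfl, le_rfl, h2⟩, quarterGrid_adj.2 (Or.inl ⟨?_, rfl⟩)⟩ <;> grind
    have hup (a b : ℕ) : ∃ p ∈ hook f g (a, b), ∃ q ∈ hook f g (a, b + 1),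
        quarterGrid.Adj p q := by
      have h1 := hf a.lt_succ_self
      have h2 := hg b.lt_succ_self
      refine ⟨(f a, g (b + 1) - 1), Or.inl ⟨rfl, ?_, ?_⟩, (f a, g (b + 1)),
        Or.inr ⟨⟨le_rfl, h1⟩, rfl⟩, quarterGrid_adj.2 (Or.inr ⟨?_, rfl⟩)⟩ <;> grind
    rintro ⟨a, b⟩ ⟨c, d⟩ hst
    rcases quarterGrid_adj.1 hst with ⟨rfl | rfl, rfl : b = d⟩ | ⟨rfl | rfl, rfl : a = c⟩
    · exact hright a b
    · obtain ⟨p, hp, q, hq, hpq⟩ := hright c b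
      exact ⟨q, hq, p, hp, hpq.symm⟩
    · exact hup a b
    · obtain ⟨p, hp, q, hq, hpq⟩ := hup a d
      exact ⟨q, hq, p, hp, hpq.symm⟩

end Hook

theorem isMinorModel_withPendants_quarterGrid {W : Type*} {H : SimpleGraph W}
    {φ : W → Set (ℕ × ℕ)} (hφ : IsMinorModel quarterGrid H φ) {s P : W → ℕ × ℕ}
    (hs : ∀ w, s w ∈ φ w) {f g : ℕ → ℕ} (hf : StrictMono f) (hg : StrictMono g)
    (hP : ∀ w, P w ∈ openCell f g (s w)) :
    IsMinorModel quarterGrid (withPendants H)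
      (Sum.elim (fun w => ⋃ p ∈ φ w, hook f g p) fun w => openCell f g (s w)) := by
  refine ((isMinorModel_hook hf hg).comp hφ).addPendants (fun w => ?_)
    (fun v w hvw => ?_) (fun v w => ?_) fun w => ?_
  · exact connected_induce_rectangle ⟨_, (hP w).1⟩ ⟨_, (hP w).2⟩
  · have hne : s v ≠ s w := (hφ.2.1 hvw).ne_of_mem (hs v) (hs w)
    exact (disjoint_cell hf hg hne).mono (openCell_subset_cell _) (openCell_subset_cell _)
  · refine disjoint_iUnion₂_left.2 fun p _ => ?_
    rcases eq_or_ne p (s w) with rfl | hne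
    · exact disjoint_hook_openCell _
    · exact (disjoint_cell hf hg hne).mono (hook_subset_cell hf hg p) (openCell_subset_cell _)
  · obtain ⟨⟨h1, h2⟩, h3, h4⟩ := hP w
    exact ⟨(f (s w).1, (P w).2), mem_biUnion (hs w) (Or.inl ⟨rfl, h3.le, h4⟩),
      (f (s w).1 + 1, (P w).2), ⟨⟨Nat.lt_succ_self _, Nat.lt_of_le_of_lt h1 h2⟩, h3, h4⟩,
      quarterGrid_adj.2 (Or.inl ⟨Or.inl rfl, rfl⟩)⟩

theorem exists_isMinorModel_withPendants_avoiding {W : Type*} [Fintype W] {H : SimpleGraph W}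
    {φ : W → Set (ℕ × ℕ)} (hφ : IsMinorModel quarterGrid H φ) {m k : ℕ}
    (hm : ∀ w, φ w ⊆ Iio m ×ˢ Iio m) (N : ℕ) (hk : (Fintype.card W + 1) * (m + N + 1) ≤ k) :
    ∃ P : W → ℕ × ℕ, ∀ Z : Finset (ℕ × ℕ), Z.card ≤ N →
      ∃ μ, IsMinorModel quarterGrid (withPendants H) μ ∧ (∀ w, P w ∈ μ (.inr w)) ∧
        (∀ w, Disjoint (Z : Set (ℕ × ℕ)) (μ (.inl w))) ∧ ∀ i, μ i ⊆ Iio k ×ˢ Iio k := by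
  classical
  choose s hs using fun w => nonempty_coe_sort.1 (hφ.1 w).nonempty
  have hs_lt (w) : (s w).1 < m ∧ (s w).2 < m := hm w (hs w)
  let X := Finset.univ.image fun w => (s w).1
  let Y := Finset.univ.image fun w => (s w).2
  obtain ⟨markX, hX⟩ := exists_strictMono_avoiding X (m := m) (by simp [X, hs_lt]) N
  obtain ⟨markY, hY⟩ := exists_strictMono_avoiding Y (m := m) (by simp [Y, hs_lt]) N
  refine ⟨fun w => (markX (s w).1, markY (s w).2), fun Z hZ => ?_⟩
  obtain ⟨f, hf, hfZ, hfX, hf_lt⟩ := hX (Z.image Prod.fst) (Finset.card_image_le.trans hZ)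
  obtain ⟨g, hg, hgZ, hgY, hg_lt⟩ := hY (Z.image Prod.snd) (Finset.card_image_le.trans hZ)
  have hmark (w) : (markX (s w).1, markY (s w).2) ∈ openCell f g (s w) :=
    ⟨hfX _ (Finset.mem_image_of_mem _ (Finset.mem_univ w)),
      hgY _ (Finset.mem_image_of_mem _ (Finset.mem_univ w))⟩
  have hXk : (X.card + 1) * (m + N + 1) ≤ k := le_trans (by gcongr; exact Finset.card_image_le) hk
  have hYk : (Y.card + 1) * (m + N + 1) ≤ k := le_trans (by gcongr; exact Finset.card_image_le) hk
  have hbox {p : ℕ × ℕ} {w} (hp : p ∈ φ w) : cell f g p ⊆ Iio k ×ˢ Iio k := fun x hx =>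
    ⟨(hx.1.2.trans (hf_lt _ (hm w hp).1)).trans_le hXk,
      (hx.2.2.trans (hg_lt _ (hm w hp).2)).trans_le hYk⟩
  refine ⟨_, isMinorModel_withPendants_quarterGrid hφ hs hf hg hmark, hmark, fun w => ?_, ?_⟩
  · refine disjoint_iUnion₂_right.2 fun p _ => disjoint_left.2 fun z hz hzp => ?_
    rcases hzp with ⟨h, -⟩ | ⟨-, h⟩
    · exact hfZ _ (h ▸ Finset.mem_image_of_mem Prod.fst hz)
    · exact hgZ _ (h ▸ Finset.mem_image_of_mem Prod.snd hz)
  · rintro (w | w)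
    · exact iUnion₂_subset fun p hp => (hook_subset_cell hf hg p).trans (hbox hp)
    · exact (openCell_subset_cell _).trans (hbox (hs w))

/-! ### Apex minors in graphs of bounded radius -/

theorem exists_connected_finset_of_dist_le {V ι : Type*} [Fintype ι] {G : SimpleGraph V} {u : V}
    {r : ℕ} (hu : ∀ w, G.Reachable u w ∧ G.dist u w ≤ r) (q : ι → V) :
    ∃ T : Finset V, T.card ≤ 1 + Fintype.card ι * (r + 1) ∧
      (G.induce (T : Set V)).Connected ∧ ∀ i, q i ∈ T := by
  classical
  choose p hp using fun i => (hu (q i)).1.exists_walk_length_eq_dist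
  refine ⟨{u} ∪ Finset.univ.biUnion fun i => (p i).support.toFinset, ?_, ?_, fun i => ?_⟩
  · refine (Finset.card_union_le _ _).trans (Nat.add_le_add (Finset.card_singleton u).le ?_)
    refine Finset.card_biUnion_le_card_mul _ _ _ fun i _ => (List.toFinset_card_le _).trans ?_
    rw [Walk.length_support, hp i]
    exact Nat.succ_le_succ (hu (q i)).2
  · have hcoe : (({u} ∪ Finset.univ.biUnion fun i => (p i).support.toFinset : Finset V) : Set V) =
        {u} ∪ ⋃ i, {v | v ∈ (p i).support} := by
      ext v
      simp
    rw [hcoe]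
    exact connected_induce_union_iUnion Connected.of_subsingleton
      (fun i => (p i).connected_induce_support) fun i => ⟨u, rfl, (p i).start_mem_support⟩
  · exact Finset.mem_union_right _ (Finset.mem_biUnion.2
      ⟨i, Finset.mem_univ i, List.mem_toFinset.2 (p i).end_mem_support⟩)

theorem card_le_card_of_inter_nonempty {V ι : Type*} {ψ : ι → Set V}
    (hψ : Pairwise fun i j => Disjoint (ψ i) (ψ j)) {T : Finset V} {Z : Finset ι}
    (hZ : ∀ i ∈ Z, ((T : Set V) ∩ ψ i).Nonempty) : Z.card ≤ T.card :=
  Finset.card_le_card_of_forall_subsingleton (fun i x => x ∈ ψ i) hZ fun x _ i hi j hj => by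
    by_contra hij
    exact disjoint_left.1 (hψ hij) hi.2 hj.2

theorem hasMinor_of_hasMinor_gridGraph {V W : Type*} [Fintype W] {G : SimpleGraph V}
    {H : SimpleGraph W} {a : W} {φ : {u | u ≠ a} → Set (ℕ × ℕ)}
    (hφ : IsMinorModel quarterGrid (H.induce {u | u ≠ a}) φ) {m : ℕ}
    (hm : ∀ w, φ w ⊆ Iio m ×ˢ Iio m) {u : V} {r : ℕ}
    (hu : ∀ w, G.Reachable u w ∧ G.dist u w ≤ r) {n k : ℕ} (hn : Fintype.card W = n + 1)
    (hk : (n + 1) * (m + (1 + n * (r + 1)) + 1) ≤ k) (hG : HasMinor G (gridGraph k)) :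
    HasMinor G H := by
  classical
  have hcard : Fintype.card {u | u ≠ a} = n := by
    rw [Set.card_ne_eq, hn, Nat.add_sub_cancel]
  rw [← hcard] at hk
  obtain ⟨P, hP⟩ := exists_isMinorModel_withPendants_avoiding hφ hm _ hk
  obtain ⟨ψ, hψ⟩ := hG
  have hPk (w) : ∃ p, gridEmbedding k p = P w := by
    obtain ⟨μ, -, hμ, -, hbox⟩ := hP ∅ (Nat.zero_le _)
    have := hbox _ (hμ w)
    rwa [← range_gridEmbedding k] at this
  choose p hp using hPk
  choose q hq using fun w => nonempty_coe_sort.1 (hψ.1 (p w)).nonempty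
  obtain ⟨T, hTcard, hT, hqT⟩ := exists_connected_finset_of_dist_le hu q
  let Z := Finset.univ.filter fun i => ((T : Set V) ∩ ψ i).Nonempty
  have hZ : (Z.map (gridEmbedding k).toEmbedding).card ≤
      1 + Fintype.card {u | u ≠ a} * (r + 1) := by
    rw [Finset.card_map]
    exact (card_le_card_of_inter_nonempty hψ.2.1 fun i hi =>
      (Finset.mem_filter.1 hi).2).trans hTcard
  obtain ⟨μ, hμ, hPμ, hZμ, hbox⟩ := hP _ hZ
  have hμ' := hψ.comp (hμ.comap (gridEmbedding k) (by simpa only [range_gridEmbedding] using hbox))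
  refine hμ'.hasMinor_of_withPendants hT (fun w => ⟨q w, hqT w, mem_biUnion (x := p w) ?_ (hq w)⟩)
    fun w => ?_
  · simpa [hp] using hPμ w
  · simp only [disjoint_iUnion_right]
    intro i hi
    by_contra h
    rw [not_disjoint_iff_nonempty_inter] at h
    exact disjoint_left.1 (hZμ w) (by simpa [Z] using h) hi

/-! ### Orbits of sets of permutations -/

section Orbits

variable {F : Type*}

/-- The equivalence relation whose classes are the orbits of the group generated by `S`. -/
def orbitSetoid (S : Set (Equiv.Perm F)) : Setoid F :=
  MulAction.orbitRel (Subgroup.closure S) F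

theorem orbitSetoid_le_iff {S : Set (Equiv.Perm F)} {r : Setoid F} :
    orbitSetoid S ≤ r ↔ ∀ s ∈ S, ∀ x, r (s x) x := by
  refine ⟨fun h s hs x => h ⟨⟨s, Subgroup.subset_closure hs⟩, rfl⟩, ?_⟩
  rintro h _ y ⟨⟨g, hg⟩, rfl⟩
  suffices ∀ y, r (g y) y from this y
  induction hg using Subgroup.closure_induction with
  | mem s hs => exact h s hs
  | one => exact r.refl
  | mul s t _ _ ihs iht => exact fun y => r.trans (ihs (t y)) (iht y)
  | inv s _ ih => exact fun y => r.symm (by simpa using ih (s⁻¹ y))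

theorem orbitSetoid_apply {S : Set (Equiv.Perm F)} {s : Equiv.Perm F} (hs : s ∈ S) (x : F) :
    orbitSetoid S (s x) x :=
  orbitSetoid_le_iff.1 le_rfl s hs x

theorem orbitSetoid_pair_le_iff {s t : Equiv.Perm F} {r : Setoid F} :
    orbitSetoid {s, t} ≤ r ↔ (∀ x, r (s x) x) ∧ ∀ x, r (t x) x := by
  simp [orbitSetoid_le_iff]

theorem orbitSetoid_left (s t : Equiv.Perm F) (x : F) : orbitSetoid {s, t} (s x) x :=
  orbitSetoid_apply (mem_insert _ _) x

theorem orbitSetoid_right (s t : Equiv.Perm F) (x : F) : orbitSetoid {s, t} (t x) x :=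
  orbitSetoid_apply (mem_insert_of_mem _ (mem_singleton _)) x

theorem card_quotient_le_of_le [Finite F] {r s : Setoid F} (h : r ≤ s) :
    Nat.card (Quotient s) ≤ Nat.card (Quotient r) :=
  Nat.card_le_card_of_surjective _ (Quotient.map_surjective h Function.surjective_id)

theorem card_quotient_lt_of_le [Finite F] {r s : Setoid F} (h : r ≤ s) {a b : F} (hs : s a b)
    (hr : ¬ r a b) : Nat.card (Quotient s) < Nat.card (Quotient r) := by
  refine (card_quotient_le_of_le h).lt_of_ne fun hcard => hr (Quotient.exact ?_)
  have hsurj := Quotient.map_surjective (sa := r) (sb := s) h Function.surjective_id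
  exact (hsurj.bijective_of_nat_card_le hcard.ge).injective (Quotient.sound hs)

theorem exists_setoid_merging [Finite F] (r : Setoid F) (a b : F) :
    ∃ s : Setoid F, r ≤ s ∧ s a b ∧ Nat.card (Quotient r) ≤ Nat.card (Quotient s) + 1 := by
  classical
  let f : F → Quotient r := fun x => if (⟦x⟧ : Quotient r) = ⟦a⟧ then ⟦b⟧ else ⟦x⟧
  refine ⟨Setoid.ker f, fun x y hxy => ?_, ?_, ?_⟩
  · simp only [Setoid.ker_def, f, Quotient.sound hxy]
  · by_cases h : (⟦b⟧ : Quotient r) = ⟦a⟧ <;> simp [Setoid.ker_def, f, h]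
  · have hrange : (univ : Set (Quotient r)) ⊆ insert ⟦a⟧ (range f) := by
      rintro ⟨x⟩ -
      by_cases h : (⟦x⟧ : Quotient r) = ⟦a⟧
      · exact Or.inl h
      · exact Or.inr ⟨x, if_neg h⟩
    rw [Nat.card_congr (Setoid.quotientKerEquivRange f), Nat.card_coe_set_eq, ← ncard_univ]
    exact (ncard_le_ncard hrange).trans (ncard_insert_le _ _)

/-- A perfect matching of `F`, given as a fixed-point-free involution. -/
structure IsPairing (α : F → F) : Prop where
  involutive : Function.Involutive α
  ne_self : ∀ x, α x ≠ x

theorem IsPairing.even_card {α : F → F} (hα : IsPairing α) {s : Finset F}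
    (hs : ∀ x ∈ s, α x ∈ s) : Even s.card := by
  have hsum : ∑ _x ∈ s, (1 : ZMod 2) = 0 :=
    Finset.sum_involution (fun x _ => α x) (fun _ _ => by decide) (fun x _ _ => hα.ne_self x) hs
      fun x _ => hα.involutive x
  rw [Finset.sum_const, nsmul_one] at hsum
  exact (ZMod.natCast_eq_zero_iff_even).1 hsum

theorem mem_iff_mem_of_orbitSetoid {α β : Equiv.Perm F} (hα : Function.Involutive α)
    (hβ : Function.Involutive β) {s : Set F} (hs : ∀ z ∈ s, α z ∈ s ∧ β z ∈ s) {x y : F}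
    (hxy : orbitSetoid {α, β} x y) : x ∈ s ↔ y ∈ s := by
  suffices orbitSetoid {α, β} ≤ Setoid.ker (· ∈ s) from Iff.of_eq (this hxy)
  refine orbitSetoid_pair_le_iff.2 ⟨fun z => propext ⟨fun h => ?_, fun h => (hs z h).1⟩,
    fun z => propext ⟨fun h => ?_, fun h => (hs z h).2⟩⟩
  · simpa only [hα z] using (hs _ h).1
  · simpa only [hβ z] using (hs _ h).2

-- On `s` the two pairings form paths and cycles; the only path is the one joining `x` to `y`.
theorem rel_of_alternating {s : Finset F} {α β : F → F} (hα : IsPairing α) (hβ : IsPairing β)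
    {r : Setoid F} {x y : F} (hx : x ∈ s) (hαs : ∀ z ∈ s, α z ∈ s ∧ r (α z) z)
    (hβs : ∀ z ∈ s, z ≠ x → z ≠ y → β z ∈ s ∧ β z ≠ x ∧ r (β z) z) : r x y := by
  classical
  by_contra hxy
  set t := s.filter (r x)
  have mem_t (z) : z ∈ t ↔ z ∈ s ∧ r x z := Finset.mem_filter
  have hαt : Even t.card := hα.even_card fun z hz => by
    rw [mem_t] at hz ⊢
    exact ⟨(hαs z hz.1).1, r.trans hz.2 (r.symm (hαs z hz.1).2)⟩
  have hβt : Even (t.erase x).card := hβ.even_card fun z hz => by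
    rw [Finset.mem_erase, mem_t] at hz ⊢
    obtain ⟨hβz, hβx, hr⟩ := hβs z hz.2.1 hz.1 fun h => hxy (h ▸ hz.2.2)
    exact ⟨hβx, hβz, r.trans hz.2.2 (r.symm hr)⟩
  have hcard := Finset.card_erase_add_one ((mem_t x).2 ⟨hx, r.refl x⟩)
  rw [← hcard] at hαt
  exact Nat.not_even_iff_odd.2 hβt.add_one hαt

end Orbits

section OrbitOrder

variable {F : Type*} {α β : Equiv.Perm F}

/-- The walk from `u` that applies `α` and `β` alternately, starting with `α`. -/
def alternatingWalk (α β : Equiv.Perm F) (u : F) : ℕ → F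
  | 0 => u
  | k + 1 => (if Even k then α else β) (alternatingWalk α β u k)

theorem alternatingWalk_succ_of_even (u : F) {k : ℕ} (hk : Even k) :
    alternatingWalk α β u (k + 1) = α (alternatingWalk α β u k) := by
  rw [alternatingWalk, if_pos hk]

theorem alternatingWalk_succ_of_odd (u : F) {k : ℕ} (hk : Odd k) :
    alternatingWalk α β u (k + 1) = β (alternatingWalk α β u k) := by
  rw [alternatingWalk, if_neg (Nat.not_even_iff_odd.2 hk)]

theorem orbitSetoid_alternatingWalk (u : F) (k : ℕ) :
    orbitSetoid {α, β} (alternatingWalk α β u k) u := by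
  induction k with
  | zero => exact Setoid.refl' _ u
  | succ k ih =>
    rcases k.even_or_odd with hk | hk
    · rw [alternatingWalk_succ_of_even u hk]
      exact Setoid.trans' _ (orbitSetoid_left α β _) ih
    · rw [alternatingWalk_succ_of_odd u hk]
      exact Setoid.trans' _ (orbitSetoid_right α β _) ih

-- A first repetition at a later index than `0` would extend backwards, since the step leading to
-- it is a step of the walk already taken.
theorem eq_zero_of_alternatingWalk_eq (hα : IsPairing α) (hβ : IsPairing β) {u : F} {m j : ℕ}
    (hinj : InjOn (alternatingWalk α β u) (Iic m)) (hj : j ≤ m)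
    (h : alternatingWalk α β u j = alternatingWalk α β u (m + 1)) : j = 0 ∧ Odd m := by
  set w := alternatingWalk α β u
  let γ : ℕ → Equiv.Perm F := fun k => if Even k then α else β
  have hγ {k l : ℕ} (hkl : Even k ↔ Even l) : γ k = γ l := if_congr hkl rfl rfl
  have hpairing (k : ℕ) : IsPairing (γ k) := by dsimp only [γ]; split_ifs <;> assumption
  have hback (k : ℕ) : γ k (w (k + 1)) = w k := (hpairing k).involutive _
  have hm : γ m (w j) = w m := h ▸ hback m
  by_cases hpar : Even j ↔ Even m
  · have hw : w (j + 1) = w m := hm ▸ hγ hpar ▸ rfl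
    rcases hj.eq_or_lt with rfl | hlt
    · exact absurd hm ((hpairing j).ne_self _)
    · have := hinj (mem_Iic.2 hlt) self_mem_Iic hw
      grind
  · rcases j with - | i
    · grind
    · have hw : w i = w m := by rw [← hm, ← hback i, hγ (by grind : Even i ↔ Even m)]
      have := hinj (mem_Iic.2 (i.le_succ.trans hj)) self_mem_Iic hw
      lia

theorem exists_injOn_alternatingWalk [Fintype F] (hα : IsPairing α) (hβ : IsPairing β) (u : F) :
    ∃ m < Fintype.card F, Odd m ∧ InjOn (alternatingWalk α β u) (Iic m) ∧
      alternatingWalk α β u (m + 1) = u := by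
  classical
  set w := alternatingWalk α β u
  have hrepeat : ∃ n, ∃ j < n, w j = w n := by
    obtain ⟨i, j, hij, h⟩ := Finite.exists_ne_map_eq_of_infinite w
    rcases hij.lt_or_gt with hij | hij
    exacts [⟨j, i, hij, h⟩, ⟨i, j, hij, h.symm⟩]
  obtain ⟨j, hj, hjn⟩ := Nat.find_spec hrepeat
  have hmin (k) (hk : k < Nat.find hrepeat) := Nat.find_min hrepeat hk
  generalize Nat.find hrepeat = n at hj hjn hmin
  obtain ⟨m, rfl⟩ : ∃ m, n = m + 1 := ⟨n - 1, by lia⟩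
  have hinj : InjOn w (Iic m) := by
    intro i hi j hj h
    by_contra hij
    rcases Nat.lt_or_gt_of_ne hij with hij | hij
    exacts [hmin j (Nat.lt_succ_of_le hj) ⟨i, hij, h⟩,
      hmin i (Nat.lt_succ_of_le hi) ⟨j, hij, h.symm⟩]
  obtain ⟨rfl, hm⟩ := eq_zero_of_alternatingWalk_eq hα hβ hinj (Nat.lt_succ_iff.1 hj) hjn
  have hcard := Finset.card_le_card_of_injOn (s := Finset.range (m + 1)) (t := Finset.univ) w
    (fun _ _ => Finset.mem_univ _) (hinj.mono fun i => by simp)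
  rw [Finset.card_range, Finset.card_univ] at hcard
  exact ⟨m, hcard, hm, hinj, hjn.symm⟩

theorem exists_alternatingWalk_eq (hα : IsPairing α) (hβ : IsPairing β) {u x : F} {m : ℕ}
    (hm : Odd m) (hclosed : alternatingWalk α β u (m + 1) = u) (hx : orbitSetoid {α, β} x u) :
    ∃ k ≤ m, alternatingWalk α β u k = x := by
  set w := alternatingWalk α β u
  change x ∈ w '' Iic m
  refine (mem_iff_mem_of_orbitSetoid hα.involutive hβ.involutive ?_ hx).2
    ⟨0, mem_Iic.2 m.zero_le, rfl⟩
  rintro _ ⟨k, hk : k ≤ m, rfl⟩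
  rcases k.even_or_odd with hk' | hk'
  · refine ⟨⟨k + 1, mem_Iic.2 (by grind), alternatingWalk_succ_of_even u hk'⟩, ?_⟩
    rcases k with - | i
    · refine ⟨m, self_mem_Iic, ?_⟩
      rw [show w 0 = w (m + 1) from hclosed.symm, ← hβ.involutive (w m)]
      exact congrArg β (alternatingWalk_succ_of_odd u hm).symm
    · refine ⟨i, mem_Iic.2 (by lia), ?_⟩
      rw [← hβ.involutive (w i)]
      exact congrArg β (alternatingWalk_succ_of_odd u (by grind)).symm
  · obtain ⟨i, rfl⟩ : ∃ i, k = i + 1 := ⟨k - 1, by grind⟩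
    refine ⟨⟨i, mem_Iic.2 (by lia), ?_⟩, ?_⟩
    · rw [← hα.involutive (w i)]
      exact congrArg α (alternatingWalk_succ_of_even u (by grind)).symm
    · rcases hk.eq_or_lt with rfl | hlt
      · exact ⟨0, mem_Iic.2 (Nat.zero_le _),
          hclosed.symm.trans (alternatingWalk_succ_of_odd u hk')⟩
      · exact ⟨i + 2, mem_Iic.2 hlt, alternatingWalk_succ_of_odd u hk'⟩

/-- A numbering of `F` under which every orbit of `⟨α, β⟩` is a block of consecutive elements
(though possibly with gaps between the blocks), read off along an alternating walk round the orbit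
that starts with an `α`-step at an even position. -/
structure IsOrbitOrder (α β : Equiv.Perm F) (pos : F → ℕ) : Prop where
  injective : Function.Injective pos
  pos_left_of_even : ∀ x, Even (pos x) → pos (α x) = pos x + 1
  pos_left_of_odd : ∀ x, Odd (pos x) → pos (α x) + 1 = pos x
  pos_right_of_odd : ∀ ⦃x z⦄, orbitSetoid {α, β} x z → pos x < pos z → Odd (pos x) →
    pos (β x) = pos x + 1
  pos_right_of_even : ∀ ⦃x z⦄, orbitSetoid {α, β} x z → pos z < pos x → Even (pos x) →
    pos (β x) + 1 = pos x
  rel_of_between : ∀ ⦃x y z⦄, orbitSetoid {α, β} x z → pos x ≤ pos y → pos y ≤ pos z →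
    orbitSetoid {α, β} x y

theorem exists_numbering_by_blocks {Q : Type*} [Fintype Q] (cls : F → Q) {loc : F → ℕ} {n : ℕ}
    (hloc : ∀ x, loc x < 2 * n) :
    ∃ pos : F → ℕ, (∀ x, pos x < 2 * n * Fintype.card Q) ∧ (∀ x, Even (pos x) ↔ Even (loc x)) ∧
      (∀ x y, cls x = cls y → pos x + loc y = pos y + loc x) ∧
      ∀ x y z, cls x = cls z → pos x ≤ pos y → pos y ≤ pos z → cls x = cls y := by
  let idx := Fintype.equivFin Q
  refine ⟨fun x => 2 * n * idx (cls x) + loc x, fun x => ?_, fun x => ?_, fun x y hxy => ?_,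
    fun x y z hxz hxy hyz => ?_⟩
  · calc 2 * n * idx (cls x) + loc x < 2 * n * (idx (cls x) + 1) := by
          rw [mul_add_one]; exact Nat.add_lt_add_left (hloc x) _
      _ ≤ 2 * n * Fintype.card Q := Nat.mul_le_mul_left _ (idx (cls x)).isLt
  · simp [Nat.even_add, mul_assoc]
  · simp only [hxy]
    lia
  · have hdiv (x) : (2 * n * idx (cls x) + loc x) / (2 * n) = idx (cls x) := by
      rw [Nat.mul_add_div (pos_of_gt (hloc x)), Nat.div_eq_of_lt (hloc x), add_zero]
    have hle := Nat.div_le_div_right (c := 2 * n) hxy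
    have hge := Nat.div_le_div_right (c := 2 * n) hyz
    rw [hdiv, hdiv] at hle hge
    rw [← hxz] at hge
    exact idx.injective (Fin.ext (hle.antisymm hge))

theorem exists_numbering_along_orbits [Fintype F] (hα : IsPairing α) (hβ : IsPairing β) :
    ∃ loc : F → ℕ, (∀ x, loc x < Fintype.card F) ∧
      (∀ x y, orbitSetoid {α, β} x y → loc x = loc y → x = y) ∧
      (∀ x, Even (loc x) → loc (α x) = loc x + 1) ∧
      (∀ x, Odd (loc x) → loc (α x) + 1 = loc x) ∧
      (∀ x z, orbitSetoid {α, β} x z → loc x < loc z → Odd (loc x) → loc (β x) = loc x + 1) ∧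
      ∀ x, 0 < loc x → Even (loc x) → loc (β x) + 1 = loc x := by
  classical
  let r := orbitSetoid {α, β}
  let w : Quotient r → ℕ → F := fun q => alternatingWalk α β q.out
  choose m hcard hm hinj hclosed using
    fun q : Quotient r => exists_injOn_alternatingWalk hα hβ q.out
  have hwα (q) {k} (hk : Even k) : w q (k + 1) = α (w q k) := alternatingWalk_succ_of_even _ hk
  have hwβ (q) {k} (hk : Odd k) : w q (k + 1) = β (w q k) := alternatingWalk_succ_of_odd _ hk
  have hw (q k) : (⟦w q k⟧ : Quotient r) = q :=
    (Quotient.sound (orbitSetoid_alternatingWalk q.out k)).trans q.out_eq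
  have hlocate (x : F) : ∃ k ≤ m ⟦x⟧, w ⟦x⟧ k = x :=
    exists_alternatingWalk_eq hα hβ (hm _) (hclosed _) (r.symm (Quotient.mk_out x))
  choose loc hloc hwloc using hlocate
  have loc_w {q k} (hk : k ≤ m q) : loc (w q k) = k :=
    hinj q (mem_Iic.2 (by simpa only [hw] using hloc (w q k))) hk
      (by simpa only [hw] using hwloc (w q k))
  have forall_walk {p : F → Prop} (h : ∀ q k, k ≤ m q → p (w q k)) (x : F) : p x :=
    hwloc x ▸ h ⟦x⟧ (loc x) (hloc x)
  refine ⟨loc, forall_walk fun q k hk => ?_, fun x y hxy h => ?_, forall_walk fun q k hk => ?_,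
    forall_walk fun q k hk => ?_, forall_walk fun q k hk z hz => ?_, forall_walk fun q k hk => ?_⟩
  · exact (loc_w hk).trans_lt (hk.trans_lt (hcard q))
  · rw [← hwloc x, ← hwloc y, h, Quotient.sound hxy]
  · rw [loc_w hk]
    intro heven
    rw [← hwα q heven, loc_w (by grind)]
  · rw [loc_w hk]
    intro hodd
    obtain ⟨k, rfl⟩ : ∃ i, k = i + 1 := ⟨k - 1, by grind⟩
    rw [hwα q (by grind), hα.involutive, loc_w (by lia)]
  · rw [loc_w hk]
    intro hlt hodd
    have hzq : ⟦z⟧ = q := (Quotient.sound hz).symm.trans (hw q k)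
    have : loc z ≤ m q := hzq ▸ hloc z
    rw [← hwβ q hodd, loc_w (by lia)]
  · rw [loc_w hk]
    intro hpos heven
    obtain ⟨k, rfl⟩ : ∃ i, k = i + 1 := ⟨k - 1, by lia⟩
    rw [hwβ q (by grind), hβ.involutive, loc_w (by lia)]

theorem exists_isOrbitOrder [Fintype F] (hα : IsPairing α) (hβ : IsPairing β) :
    ∃ pos : F → ℕ, IsOrbitOrder α β pos ∧
      ∀ x, pos x < 2 * Fintype.card F * Fintype.card F := by
  classical
  obtain ⟨loc, hloc, hinj, hleft, hleft', hright, hright'⟩ := exists_numbering_along_orbits hα hβ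
  obtain ⟨pos, hlt, hpar, hadd, hblock⟩ :=
    exists_numbering_by_blocks (Quotient.mk (orbitSetoid {α, β})) (n := Fintype.card F)
      fun x => (hloc x).trans_le (by lia)
  have hparodd (x) : Odd (pos x) ↔ Odd (loc x) := by simp only [← Nat.not_even_iff_odd, hpar]
  have hα_add (x) := hadd (α x) x (Quotient.sound (orbitSetoid_left α β x))
  have hβ_add (x) := hadd (β x) x (Quotient.sound (orbitSetoid_right α β x))
  refine ⟨pos, ⟨fun x y h => ?_, fun x hx => ?_, fun x hx => ?_, fun x z hxz hlt hx => ?_,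
    fun x z hxz hlt hx => ?_, fun x y z hxz hxy hyz => ?_⟩, fun x => (hlt x).trans_le ?_⟩
  · have hxy := hblock x y x rfl h.le h.ge
    exact hinj x y (Quotient.exact hxy) (by have := hadd x y hxy; lia)
  · have := hleft x ((hpar x).1 hx)
    grind
  · have := hleft' x ((hparodd x).1 hx)
    grind
  · have := hadd x z (Quotient.sound hxz)
    have := hright x z hxz (by lia) ((hparodd x).1 hx)
    grind
  · have := hadd x z (Quotient.sound hxz)
    have := hright' x (by lia) ((hpar x).1 hx)
    grind
  · exact Quotient.exact (hblock x y z (Quotient.sound hxz) hxy hyz)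
  · exact Nat.mul_le_mul_left _ (Fintype.card_quotient_le _)

namespace IsOrbitOrder

variable {pos : F → ℕ} {x y z : F}

theorem pos_left_mem_Icc (h : IsOrbitOrder α β pos) (hx : Even (pos x)) (hy : Odd (pos y))
    (hz : pos z ∈ Icc (pos x) (pos y)) : pos (α z) ∈ Icc (pos x) (pos y) := by
  simp only [mem_Icc] at hz ⊢
  rcases (pos z).even_or_odd with hpar | hpar
  · have := h.pos_left_of_even z hpar
    grind
  · have := h.pos_left_of_odd z hpar
    grind

theorem pos_right_mem_Ioo (h : IsOrbitOrder α β pos) (hxy : orbitSetoid {α, β} x y)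
    (hx : Even (pos x)) (hy : Odd (pos y)) (hz : pos z ∈ Icc (pos x) (pos y)) (hzx : z ≠ x)
    (hzy : z ≠ y) : pos (β z) ∈ Ioo (pos x) (pos y) := by
  have hxz : orbitSetoid {α, β} x z := h.rel_of_between hxy hz.1 hz.2
  have hlt : pos x < pos z := hz.1.lt_of_ne fun e => hzx (h.injective e).symm
  have hgt : pos z < pos y := hz.2.lt_of_ne fun e => hzy (h.injective e)
  rw [mem_Ioo]
  rcases (pos z).even_or_odd with hpar | hpar
  · have := h.pos_right_of_even (Setoid.symm' _ hxz) hlt hpar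
    grind
  · have := h.pos_right_of_odd (Setoid.trans' _ (Setoid.symm' _ hxz) hxy) hgt hpar
    grind

theorem pos_right_mem_Icc (h : IsOrbitOrder α β pos) (hxy : orbitSetoid {α, β} x y)
    (hz : pos z ∈ Ioo (pos x) (pos y)) : pos (β z) ∈ Icc (pos x) (pos y) := by
  have hxz : orbitSetoid {α, β} x z := h.rel_of_between hxy hz.1.le hz.2.le
  rw [mem_Icc]
  rcases (pos z).even_or_odd with hpar | hpar
  · have := h.pos_right_of_even (Setoid.symm' _ hxz) hz.1 hpar
    grind
  · have := h.pos_right_of_odd (Setoid.trans' _ (Setoid.symm' _ hxz) hxy) hz.2 hpar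
    grind

end IsOrbitOrder

end OrbitOrder

/-! ### Boundaries of spanning ribbon subgraphs -/

namespace FlagSystem

variable {M : FlagSystem}

instance : Fintype M.F := M.fin

theorem isPairing_σ₀ (M : FlagSystem) : IsPairing M.σ₀ := ⟨Equiv.congr_fun M.inv₀, M.fpf₀⟩

theorem isPairing_σ₁ (M : FlagSystem) : IsPairing M.σ₁ := ⟨Equiv.congr_fun M.inv₁, M.fpf₁⟩

theorem isPairing_σ₂ (M : FlagSystem) : IsPairing M.σ₂ := ⟨Equiv.congr_fun M.inv₂, M.fpf₂⟩

theorem σ₀_σ₂_comm (x : M.F) : M.σ₀ (M.σ₂ x) = M.σ₂ (M.σ₀ x) := Equiv.congr_fun M.comm02 x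

/-- The dual map, in which the vertices and the faces are interchanged. -/
abbrev dual (M : FlagSystem) : FlagSystem where
  __ := M
  σ₀ := M.σ₂
  σ₂ := M.σ₀
  inv₀ := M.inv₂
  inv₂ := M.inv₀
  fpf₀ := M.fpf₂
  fpf₂ := M.fpf₀
  comm02 := M.comm02.symm
  fpf02 := M.comm02 ▸ M.fpf02

variable {E : Type*} {e : M.F → E}

/-- `e` labels the flags by the edges of the map, with `E` as the set of edges. -/
structure IsEdgeMap (e : M.F → E) : Prop where
  ker_eq : Setoid.ker e = orbitSetoid {M.σ₀, M.σ₂}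
  surjective : Function.Surjective e

theorem isEdgeMap_mk (M : FlagSystem) :
    M.IsEdgeMap (Quotient.mk (orbitSetoid {M.σ₀, M.σ₂})) :=
  ⟨Setoid.ker_mk_eq _, Quotient.mk_surjective⟩

namespace IsEdgeMap

theorem dual (he : M.IsEdgeMap e) : M.dual.IsEdgeMap e :=
  ⟨he.ker_eq.trans (congrArg orbitSetoid (pair_comm M.σ₀ M.σ₂)), he.surjective⟩

theorem nE_eq_card (he : M.IsEdgeMap e) : M.nE = Nat.card E := by
  change Nat.card (Quotient (orbitSetoid {M.σ₀, M.σ₂})) = _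
  rw [← he.ker_eq]
  exact Nat.card_congr (Setoid.quotientKerEquivOfSurjective e he.surjective)

theorem map_σ₀ (he : M.IsEdgeMap e) (x : M.F) : e (M.σ₀ x) = e x :=
  he.ker_eq.ge (orbitSetoid_left M.σ₀ M.σ₂ x)

theorem map_σ₂ (he : M.IsEdgeMap e) (x : M.F) : e (M.σ₂ x) = e x :=
  he.ker_eq.ge (orbitSetoid_right M.σ₀ M.σ₂ x)

theorem eq_or_of_map_eq (he : M.IsEdgeMap e) {x y : M.F} (h : e y = e x) :
    y = x ∨ y = M.σ₀ x ∨ y = M.σ₂ x ∨ y = M.σ₂ (M.σ₀ x) := by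
  refine (mem_iff_mem_of_orbitSetoid (s := {x, M.σ₀ x, M.σ₂ x, M.σ₂ (M.σ₀ x)})
    M.isPairing_σ₀.involutive M.isPairing_σ₂.involutive ?_ (he.ker_eq.le h)).2 (Or.inl rfl)
  rintro z (rfl | rfl | rfl | rfl) <;>
    simp [σ₀_σ₂_comm, M.isPairing_σ₀.involutive _, M.isPairing_σ₂.involutive _]

theorem card_flags_le [Fintype E] (he : M.IsEdgeMap e) :
    Fintype.card M.F ≤ 4 * Fintype.card E := by
  classical
  refine Finset.card_le_mul_card_image_of_maps_to (f := e) (fun _ _ => Finset.mem_univ _) 4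
    fun c _ => ?_
  obtain ⟨x, rfl⟩ := he.surjective c
  refine (Finset.card_le_card fun y hy => ?_).trans
    (Finset.card_le_four (a := x) (b := M.σ₀ x) (c := M.σ₂ x) (d := M.σ₂ (M.σ₀ x)))
  simpa using he.eq_or_of_map_eq (Finset.mem_filter.1 hy).2

variable [DecidableEq E] {S S' T : Finset E} {u x y : M.F}

/-- The involution that, together with `σ₁`, runs along the boundary of the spanning ribbon
subgraph with edge set `S`: along the sides of the ribbons of `S`, past the ends of the others. -/
def toggle (he : M.IsEdgeMap e) (S : Finset E) : Equiv.Perm M.F :=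
  Function.Involutive.toPerm (fun x => if e x ∈ S then M.σ₀ x else M.σ₂ x) fun x => by
    by_cases h : e x ∈ S <;>
      simp [h, he.map_σ₀, he.map_σ₂, M.isPairing_σ₀.involutive x, M.isPairing_σ₂.involutive x]

theorem toggle_apply (he : M.IsEdgeMap e) (S : Finset E) (x : M.F) :
    he.toggle S x = if e x ∈ S then M.σ₀ x else M.σ₂ x :=
  rfl

theorem toggle_of_mem (he : M.IsEdgeMap e) (h : e x ∈ S) : he.toggle S x = M.σ₀ x := if_pos h

theorem toggle_of_notMem (he : M.IsEdgeMap e) (h : e x ∉ S) : he.toggle S x = M.σ₂ x := if_neg h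

theorem toggle_congr (he : M.IsEdgeMap e) (h : e x ∈ S ↔ e x ∈ S') :
    he.toggle S x = he.toggle S' x :=
  if_congr h rfl rfl

theorem map_toggle (he : M.IsEdgeMap e) (S : Finset E) (x : M.F) : e (he.toggle S x) = e x := by
  by_cases h : e x ∈ S
  · rw [he.toggle_of_mem h, he.map_σ₀]
  · rw [he.toggle_of_notMem h, he.map_σ₂]

theorem isPairing_toggle (he : M.IsEdgeMap e) (S : Finset E) : IsPairing (he.toggle S) where
  involutive := Function.Involutive.toPerm_involutive _
  ne_self x := by
    by_cases h : e x ∈ S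
    · exact he.toggle_of_mem h ▸ M.fpf₀ x
    · exact he.toggle_of_notMem h ▸ M.fpf₂ x

theorem toggle_comm (he : M.IsEdgeMap e) (S S' : Finset E) (x : M.F) :
    he.toggle S (he.toggle S' x) = he.toggle S' (he.toggle S x) := by
  by_cases h : e x ∈ S <;> by_cases h' : e x ∈ S' <;>
    simp [toggle_apply, h, h', he.map_σ₀, he.map_σ₂, σ₀_σ₂_comm]

theorem eq_or_of_map_eq_of_mem_iff (he : M.IsEdgeMap e) (hS : e x ∈ S ↔ e x ∉ S')
    (h : e y = e x) :
    y = x ∨ y = he.toggle S x ∨ y = he.toggle S' x ∨ y = he.toggle S (he.toggle S' x) := by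
  have := he.eq_or_of_map_eq h
  by_cases hx : e x ∈ S'
  · rw [he.toggle_of_mem hx, he.toggle_of_notMem (fun h => hS.1 h hx),
      he.toggle_of_notMem (fun h => hS.1 (he.map_σ₀ x ▸ h) hx)]
    tauto
  · rw [he.toggle_of_notMem hx, he.toggle_of_mem (hS.2 hx),
      he.toggle_of_mem (he.map_σ₂ x ▸ hS.2 hx), σ₀_σ₂_comm]
    tauto

theorem dual_toggle_compl [Fintype E] (he : M.IsEdgeMap e) (S : Finset E) :
    he.dual.toggle Sᶜ = he.toggle S := by
  refine Equiv.ext fun x => ?_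
  by_cases h : e x ∈ S
  · exact (he.dual.toggle_of_notMem (Finset.notMem_compl.2 h)).trans (he.toggle_of_mem h).symm
  · exact (he.dual.toggle_of_mem (Finset.mem_compl.2 h)).trans (he.toggle_of_notMem h).symm

/-- The equivalence relation on flags whose classes are the boundary components of the spanning
ribbon subgraph with edge set `S`: the vertices for `S = ∅`, the faces for `S = univ`. -/
def boundary (he : M.IsEdgeMap e) (S : Finset E) : Setoid M.F :=
  orbitSetoid {M.σ₁, he.toggle S}

/-- The number of boundary components of the spanning ribbon subgraph with edge set `S`. -/
noncomputable def numBoundaries (he : M.IsEdgeMap e) (S : Finset E) : ℕ :=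
  Nat.card (Quotient (he.boundary S))

theorem boundary_σ₁ (he : M.IsEdgeMap e) (S : Finset E) (x : M.F) :
    he.boundary S (M.σ₁ x) x :=
  orbitSetoid_left _ _ x

theorem boundary_toggle (he : M.IsEdgeMap e) (S : Finset E) (x : M.F) :
    he.boundary S (he.toggle S x) x :=
  orbitSetoid_right _ _ x

theorem nV_eq_numBoundaries (he : M.IsEdgeMap e) : M.nV = he.numBoundaries ∅ := by
  have : he.toggle ∅ = M.σ₂ := Equiv.ext fun x => he.toggle_of_notMem (Finset.notMem_empty _)
  rw [numBoundaries, boundary, this]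
  rfl

theorem nF_eq_numBoundaries [Fintype E] (he : M.IsEdgeMap e) :
    M.nF = he.numBoundaries Finset.univ := by
  have : he.toggle Finset.univ = M.σ₀ := Equiv.ext fun x => he.toggle_of_mem (Finset.mem_univ _)
  rw [numBoundaries, boundary, this, pair_comm]
  rfl

theorem nC_eq_numBoundaries (he : M.IsEdgeMap e)
    (hT : he.boundary T = orbitSetoid {M.σ₀, M.σ₁, M.σ₂}) : M.nC = he.numBoundaries T := by
  rw [numBoundaries, hT]
  rfl

theorem dual_boundary_compl [Fintype E] (he : M.IsEdgeMap e) (S : Finset E) :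
    he.dual.boundary Sᶜ = he.boundary S :=
  congrArg (fun t => orbitSetoid {M.σ₁, t}) (he.dual_toggle_compl S)

theorem dual_numBoundaries_compl [Fintype E] (he : M.IsEdgeMap e) (S : Finset E) :
    he.dual.numBoundaries Sᶜ = he.numBoundaries S :=
  congrArg (fun r : Setoid M.F => Nat.card (Quotient r)) (he.dual_boundary_compl S)

theorem boundary_le (he : M.IsEdgeMap e) {r : Setoid M.F} (hS : ∀ c ≠ e u, c ∈ S ↔ c ∈ S')
    (hr : he.boundary S' ≤ r) (hu : r (he.toggle S u) u) : he.boundary S ≤ r := by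
  by_cases hu' : e u ∈ S ↔ e u ∈ S'
  · rwa [show S = S' from Finset.ext fun c => if hc : c = e u then hc ▸ hu' else hS c hc]
  have ht' (x) : r (he.toggle S' x) x := hr (he.boundary_toggle S' x)
  refine orbitSetoid_pair_le_iff.2 ⟨fun x => hr (he.boundary_σ₁ S' x), fun x => ?_⟩
  by_cases hx : e x = e u
  · have hu'' : r (he.toggle S (he.toggle S' u)) (he.toggle S' u) := by
      rw [he.toggle_comm]
      exact r.trans (ht' _) (r.trans hu (r.symm (ht' u)))
    have hdiff : e u ∈ S ↔ e u ∉ S' := by tauto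
    rcases he.eq_or_of_map_eq_of_mem_iff hdiff hx with rfl | rfl | rfl | rfl
    · exact hu
    · rw [(he.isPairing_toggle S).involutive]
      exact r.symm hu
    · exact hu''
    · rw [(he.isPairing_toggle S).involutive]
      exact r.symm hu''
  · rw [he.toggle_congr (hS _ hx)]
    exact ht' x

theorem numBoundaries_le_add_one (he : M.IsEdgeMap e) {a : E} (hS : ∀ c ≠ a, c ∈ S ↔ c ∈ S') :
    he.numBoundaries S' ≤ he.numBoundaries S + 1 := by
  obtain ⟨u, rfl⟩ := he.surjective a
  obtain ⟨r, hle, hr, hcard⟩ := exists_setoid_merging (he.boundary S') (he.toggle S u) u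
  exact hcard.trans (Nat.succ_le_succ (card_quotient_le_of_le (he.boundary_le hS hle hr)))

theorem numBoundaries_union (he : M.IsEdgeMap e) (S D : Finset E) :
    he.numBoundaries (S ∪ D) ≤ he.numBoundaries S + D.card ∧
      he.numBoundaries S ≤ he.numBoundaries (S ∪ D) + D.card := by
  induction D using Finset.induction with
  | empty => simp
  | insert a D ha ih =>
    have h := he.numBoundaries_le_add_one (S := S ∪ D) (S' := S ∪ insert a D) (a := a) (by grind)
    have h' := he.numBoundaries_le_add_one (S := S ∪ insert a D) (S' := S ∪ D) (a := a) (by grind)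
    rw [Finset.card_insert_of_notMem ha]
    lia

theorem boundary_le_and_numBoundaries_lt (he : M.IsEdgeMap e) (hS : ∀ c ≠ e u, c ∈ S ↔ c ∈ S')
    (hu : ¬ he.boundary S u (he.toggle S' u)) :
    he.boundary S ≤ he.boundary S' ∧ he.numBoundaries S' < he.numBoundaries S := by
  classical
  have hdiff : e u ∈ S ↔ e u ∉ S' := by
    by_contra h
    rw [← he.toggle_congr (x := u) (S := S) (S' := S') (by tauto)] at hu
    exact hu <| Setoid.symm' _ (he.boundary_toggle S u)
  have hu' : he.boundary S' u (he.toggle S u) := by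
    refine rel_of_alternating (s := {z | he.boundary S u z}) M.isPairing_σ₁ (he.isPairing_toggle S')
      (by simp) (fun z hz => ?_) fun z hz hzu hzu' => ?_
    · rw [Finset.mem_filter_univ] at hz ⊢
      exact ⟨Setoid.trans' _ hz (Setoid.symm' _ (he.boundary_σ₁ S z)), he.boundary_σ₁ S' z⟩
    · rw [Finset.mem_filter_univ] at hz ⊢
      have hze : e z ≠ e u := fun h => by
        rcases he.eq_or_of_map_eq_of_mem_iff hdiff h with rfl | rfl | rfl | rfl
        · exact hzu rfl
        · exact hzu' rfl
        · exact hu hz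
        · exact hu (Setoid.trans' _ hz (he.boundary_toggle S _))
      refine ⟨?_, fun h => hze (by rw [← h, he.map_toggle]), he.boundary_toggle S' z⟩
      rw [← he.toggle_congr (hS _ hze)]
      exact Setoid.trans' _ hz (Setoid.symm' _ (he.boundary_toggle S z))
  have hle : he.boundary S ≤ he.boundary S' := he.boundary_le hS le_rfl (Setoid.symm' _ hu')
  exact ⟨hle, card_quotient_lt_of_le hle (Setoid.symm' _ (he.boundary_toggle S' u)) hu⟩

theorem exists_quasiTree [Finite E] (he : M.IsEdgeMap e) :
    ∃ T : Finset E, he.boundary T = orbitSetoid {M.σ₀, M.σ₁, M.σ₂} ∧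
      he.numBoundaries T + T.card = he.numBoundaries ∅ := by
  classical
  have := Fintype.ofFinite E
  obtain ⟨T, hT, hmax⟩ := Finset.exists_max_image
    ({T | he.numBoundaries T + T.card = he.numBoundaries ∅ ∧ he.boundary ∅ ≤ he.boundary T} :
      Finset (Finset E)) Finset.card ⟨∅, by simp⟩
  simp only [Finset.mem_filter_univ] at hT hmax
  have rel_σ₀ (u) : he.boundary T (M.σ₀ u) u := by
    by_contra hu
    have huT : e u ∉ T := fun h => hu (he.toggle_of_mem h ▸ he.boundary_toggle T u)
    rw [Setoid.comm', ← he.toggle_of_mem (Finset.mem_insert_self (e u) T)] at hu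
    have hS : ∀ c ≠ e u, c ∈ T ↔ c ∈ insert (e u) T := by grind
    obtain ⟨hle, hlt⟩ := he.boundary_le_and_numBoundaries_lt hS hu
    have hge := he.numBoundaries_le_add_one fun c hc => (hS c hc).symm
    have hcard := Finset.card_insert_of_notMem huT
    have := hmax _ ⟨by lia, hT.2.trans hle⟩
    lia
  have rel_σ₂ (u) : he.boundary T (M.σ₂ u) u :=
    hT.2 (he.toggle_of_notMem (Finset.notMem_empty _) ▸ he.boundary_toggle ∅ u)
  refine ⟨T, le_antisymm ?_ ?_, hT.1⟩
  · refine orbitSetoid_pair_le_iff.2 ⟨orbitSetoid_apply (by simp), fun x => ?_⟩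
    by_cases hx : e x ∈ T
    · exact he.toggle_of_mem hx ▸ orbitSetoid_apply (by simp) x
    · exact he.toggle_of_notMem hx ▸ orbitSetoid_apply (by simp) x
  · simpa [orbitSetoid_le_iff] using ⟨rel_σ₀, he.boundary_σ₁ T, rel_σ₂⟩

theorem numBoundaries_strictMonoOn [Fintype E] (he : M.IsEdgeMap e)
    (hT : he.numBoundaries Finset.univ = he.numBoundaries T + Tᶜ.card) :
    StrictMonoOn he.numBoundaries (Ici T) := by
  have heq {S} (hS : T ⊆ S) : he.numBoundaries S + T.card = he.numBoundaries T + S.card := by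
    have hle := (he.numBoundaries_union T (S \ T)).1
    have hge := (he.numBoundaries_union S Sᶜ).1
    rw [Finset.union_sdiff_of_subset hS] at hle
    rw [Finset.union_compl] at hge
    have := Finset.card_sdiff_add_card_eq_card hS
    have := Finset.card_compl_add_card S
    have := Finset.card_compl_add_card T
    lia
  intro S hS S' hS' hlt
  have := heq hS
  have := heq hS'
  have := Finset.card_lt_card hlt
  lia

end IsEdgeMap

theorem nV_add_nF_le (M : FlagSystem) : M.nV + M.nF ≤ 2 * M.nC + M.nE := by
  classical
  have he := M.isEdgeMap_mk
  obtain ⟨T, hbdry, hcard⟩ := he.exists_quasiTree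
  have hF := (he.numBoundaries_union T Tᶜ).1
  rw [Finset.union_compl, ← he.nF_eq_numBoundaries] at hF
  rw [he.nV_eq_numBoundaries, he.nE_eq_card, Nat.card_eq_fintype_card,
    he.nC_eq_numBoundaries hbdry, ← Finset.card_compl_add_card T]
  lia

end FlagSystem

/-! ### Book orders of spherical maps -/

/-- The matching `s` of the points `pos x` of a line can be drawn without crossings by arcs in a
half-plane bounded by that line. -/
def Noncrossing {F : Type*} (pos : F → ℕ) (s : F → F) : Prop :=
  ∀ x u, ¬ (pos x < pos u ∧ pos u < pos (s x) ∧ pos (s x) < pos (s u))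

namespace FlagSystem

variable {M : FlagSystem} {E : Type*} {e : M.F → E}

/-- A numbering of the flags in which `σ₁` joins neighbours on the line, while the arcs of `σ₀` can
be drawn without crossings on one side of the line and those of `σ₂` on the other. -/
structure IsBookOrder (M : FlagSystem) (pos : M.F → ℕ) : Prop where
  injective : Function.Injective pos
  pos_σ₁ : ∀ x, pos (M.σ₁ x) = pos x + 1 ∨ pos (M.σ₁ x) + 1 = pos x
  noncrossing_σ₀ : Noncrossing pos M.σ₀
  noncrossing_σ₂ : Noncrossing pos M.σ₂

namespace IsEdgeMap

variable [DecidableEq E] {T : Finset E} {pos : M.F → ℕ} {u x y z : M.F}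

theorem pos_toggle_mem_Ioo_and_map_ne (he : M.IsEdgeMap e)
    (h : IsOrbitOrder M.σ₁ (he.toggle T) pos) (hxy : he.boundary T x y) (hxT : e x ∉ T)
    (hy' : y = M.σ₀ x ∨ y = M.σ₂ (M.σ₀ x)) (hx : Even (pos x)) (hy : Odd (pos y))
    (hz : pos z ∈ Icc (pos x) (pos y)) (hzx : z ≠ x) (hzy : z ≠ y) :
    pos (he.toggle T z) ∈ Ioo (pos x) (pos y) ∧ e z ≠ e x := by
  have hIoo := h.pos_right_mem_Ioo hxy hx hy hz hzx hzy
  refine ⟨hIoo, fun hzx' => ?_⟩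
  rw [he.toggle_of_notMem (hzx' ▸ hxT)] at hIoo
  have hne (w) (hw : pos w ∈ Ioo (pos x) (pos y)) : w ≠ x ∧ w ≠ y :=
    ⟨fun h => (h ▸ hw).1.ne rfl, fun h => (h ▸ hw).2.ne rfl⟩
  have := hne _ hIoo
  have h₂ (w) : M.σ₂ (M.σ₂ w) = w := M.isPairing_σ₂.involutive w
  rcases he.eq_or_of_map_eq hzx' with rfl | rfl | rfl | rfl <;> grind

-- Otherwise adding the ribbon of `x` to `T` would not increase the number of boundary components.
theorem not_even_and_odd_of_lt (he : M.IsEdgeMap e) (h : IsOrbitOrder M.σ₁ (he.toggle T) pos)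
    (hT : ∀ u, he.boundary T (M.σ₀ u) u) (hmono : StrictMonoOn he.numBoundaries (Ici T))
    (hxT : e x ∉ T) (hlt : pos x < pos (M.σ₂ (M.σ₀ x))) :
    ¬ (Even (pos x) ∧ Odd (pos (M.σ₂ (M.σ₀ x)))) := by
  classical
  rintro ⟨hx, hy⟩
  set y := M.σ₂ (M.σ₀ x)
  have hσ₂ : he.toggle T x = M.σ₂ x := he.toggle_of_notMem hxT
  have hσ₀ : he.toggle (insert (e x) T) (M.σ₂ x) = y :=
    (he.toggle_of_mem (by simp [he.map_σ₂])).trans (σ₀_σ₂_comm x)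
  have hxy : he.boundary T x y := by
    have := he.boundary_toggle T (M.σ₀ x)
    rw [he.toggle_of_notMem (by rwa [he.map_σ₀])] at this
    exact Setoid.symm' _ (Setoid.trans' _ this (hT x))
  have hxy' : he.boundary (insert (e x) T) x y := by
    refine rel_of_alternating (s := {z | pos z ∈ Icc (pos x) (pos y)}) M.isPairing_σ₁
      (he.isPairing_toggle T) (by simpa using hlt.le) (fun z hz => ?_) fun z hz hzx hzy => ?_
    · rw [Finset.mem_filter_univ] at hz ⊢
      exact ⟨h.pos_left_mem_Icc hx hy hz, he.boundary_σ₁ _ z⟩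
    · rw [Finset.mem_filter_univ] at hz ⊢
      obtain ⟨hIoo, hne⟩ :=
        he.pos_toggle_mem_Ioo_and_map_ne h hxy hxT (Or.inr rfl) hx hy hz hzx hzy
      refine ⟨Ioo_subset_Icc_self hIoo, fun hzx => hIoo.1.ne (hzx ▸ rfl), ?_⟩
      rw [he.toggle_congr (S' := insert (e x) T) (by simp [hne])]
      exact he.boundary_toggle _ z
  have hle : he.boundary T ≤ he.boundary (insert (e x) T) := by
    refine he.boundary_le (u := x) (by grind) le_rfl ?_
    rw [hσ₂]
    refine Setoid.symm' _ (Setoid.trans' _ hxy' ?_)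
    exact hσ₀ ▸ he.boundary_toggle _ _
  have hlt := hmono self_mem_Ici (Finset.subset_insert (e x) T) (Finset.ssubset_insert hxT)
  exact hlt.not_ge (card_quotient_le_of_le hle)

theorem even_pos_σ₀_iff (he : M.IsEdgeMap e) (h : IsOrbitOrder M.σ₁ (he.toggle T) pos)
    (hT : ∀ u, he.boundary T (M.σ₀ u) u) (hmono : StrictMonoOn he.numBoundaries (Ici T))
    (hxT : e x ∉ T) : Even (pos (M.σ₀ x)) ↔ Odd (pos x) := by
  wlog hlt : pos x < pos (M.σ₀ x) generalizing x
  · have := this (x := M.σ₀ x) (by rwa [he.map_σ₀])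
    have := h.injective.ne (M.fpf₀ x)
    have := M.isPairing_σ₀.involutive x
    grind
  have htoggle (z) (hz : e z = e x) : he.toggle T z = M.σ₂ z := he.toggle_of_notMem (hz ▸ hxT)
  have hσ₀ := htoggle _ (he.map_σ₀ x)
  by_contra hpar
  rcases (pos x).even_or_odd with hx | hx
  · have hpos := h.pos_right_of_even (hT x) hlt (by grind)
    rw [hσ₀] at hpos
    exact he.not_even_and_odd_of_lt h hT hmono hxT (by grind) (by grind)
  · have hpos := h.pos_right_of_odd (Setoid.symm' _ (hT x)) hlt hx
    rw [htoggle x rfl] at hpos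
    have := he.not_even_and_odd_of_lt h hT hmono (x := M.σ₂ x) (by rwa [he.map_σ₂])
    rw [σ₀_σ₂_comm, M.isPairing_σ₂.involutive] at this
    grind

theorem pos_σ₀_le_of_mem_Icc (he : M.IsEdgeMap e) (h : IsOrbitOrder M.σ₁ (he.toggle T) pos)
    (hT : ∀ u, he.boundary T (M.σ₀ u) u) (hmono : StrictMonoOn he.numBoundaries (Ici T))
    (hxT : e x ∉ T) (hx : Even (pos x)) (hu : pos u ∈ Icc (pos x) (pos (M.σ₀ x))) :
    pos (M.σ₀ u) ≤ pos (M.σ₀ x) := by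
  classical
  by_contra! hlt
  have hσ₀x : Odd (pos (M.σ₀ x)) := by
    have := he.even_pos_σ₀_iff h hT hmono hxT
    grind
  set S := insert (e x) T
  have hnot : ¬ he.boundary S u (M.σ₀ u) := fun hrel => by
    refine (mem_iff_mem_of_orbitSetoid (s := {z | pos z ∈ Icc (pos x) (pos (M.σ₀ x))})
      M.isPairing_σ₁.involutive (he.isPairing_toggle S).involutive
      (fun z hz => ⟨?_, ?_⟩) hrel).1 hu |>.2.not_gt hlt
    · exact h.pos_left_mem_Icc hx hσ₀x hz
    · have hle := hz.1.trans hz.2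
      by_cases hzx : z = x
      · rw [hzx, he.toggle_of_mem (Finset.mem_insert_self _ _)]
        exact right_mem_Icc.2 hle
      by_cases hzx' : z = M.σ₀ x
      · rw [hzx', he.toggle_of_mem (by simp [S, he.map_σ₀]), M.isPairing_σ₀.involutive]
        exact left_mem_Icc.2 hle
      obtain ⟨hIoo, hne⟩ := he.pos_toggle_mem_Ioo_and_map_ne h (Setoid.symm' _ (hT x)) hxT
        (Or.inl rfl) hx hσ₀x hz hzx hzx'
      change pos (he.toggle S z) ∈ Icc _ _
      rw [he.toggle_congr (S' := T) (by simp [S, hne])]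
      exact Ioo_subset_Icc_self hIoo
  have huS : e u ∉ S := fun hu' =>
    hnot <| Setoid.symm' _ (he.toggle_of_mem hu' ▸ he.boundary_toggle S u)
  rw [← he.toggle_of_mem (Finset.mem_insert_self (e u) S)] at hnot
  have hsub : T ⊆ S := Finset.subset_insert _ _
  exact (he.boundary_le_and_numBoundaries_lt (by grind) hnot).2.not_gt <|
    hmono hsub (hsub.trans (Finset.subset_insert _ _)) (Finset.ssubset_insert huS)

theorem noncrossing_σ₀ (he : M.IsEdgeMap e) (h : IsOrbitOrder M.σ₁ (he.toggle T) pos)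
    (hT : ∀ u, he.boundary T (M.σ₀ u) u) (hmono : StrictMonoOn he.numBoundaries (Ici T)) :
    Noncrossing pos M.σ₀ := by
  rintro x u ⟨hxu, hux, hlt⟩
  by_cases hu : e u ∈ T
  · have := (h.pos_right_mem_Icc (Setoid.symm' _ (hT x)) ⟨hxu, hux⟩).2
    rw [he.toggle_of_mem hu] at this
    exact this.not_gt hlt
  by_cases hx : e x ∈ T
  · have := (h.pos_right_mem_Icc (Setoid.symm' _ (hT u)) ⟨hux, hlt⟩).1
    rw [he.toggle_of_mem (by rwa [he.map_σ₀]), M.isPairing_σ₀.involutive] at this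
    exact this.not_gt hxu
  have hpar := he.even_pos_σ₀_iff h hT hmono hx
  rcases (pos x).even_or_odd with hx' | hx'
  · exact (he.pos_σ₀_le_of_mem_Icc h hT hmono hx hx' ⟨hxu.le, hux.le⟩).not_gt hlt
  · have hpos := h.pos_right_of_odd (Setoid.symm' _ (hT x)) (hxu.trans hux) hx'
    have hpos' := h.pos_right_of_even (hT x) (hxu.trans hux) (hpar.2 hx')
    rw [he.toggle_of_notMem hx] at hpos
    rw [he.toggle_of_notMem (by rwa [he.map_σ₀]), ← σ₀_σ₂_comm] at hpos'
    have := he.pos_σ₀_le_of_mem_Icc h hT hmono (x := M.σ₂ x) (u := u) (by rwa [he.map_σ₂])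
    grind

end IsEdgeMap

theorem exists_isBookOrder (hM : M.nV + M.nF = 2 * M.nC + M.nE) :
    ∃ pos, M.IsBookOrder pos ∧ ∀ x, pos x < 2 * Fintype.card M.F * Fintype.card M.F := by
  classical
  have he := M.isEdgeMap_mk
  obtain ⟨T, hbdry, hcard⟩ := he.exists_quasiTree
  obtain ⟨pos, h, hlt⟩ := exists_isOrbitOrder M.isPairing_σ₁ (he.isPairing_toggle T)
  rw [he.nV_eq_numBoundaries, he.nF_eq_numBoundaries, he.nE_eq_card, Nat.card_eq_fintype_card,
    he.nC_eq_numBoundaries hbdry, ← Finset.card_compl_add_card T] at hM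
  have hmono : StrictMonoOn he.numBoundaries (Ici T) := he.numBoundaries_strictMonoOn (by lia)
  have hmono' : StrictMonoOn he.dual.numBoundaries (Ici Tᶜ) := by
    refine he.dual.numBoundaries_strictMonoOn ?_
    rw [← Finset.compl_empty, he.dual_numBoundaries_compl, he.dual_numBoundaries_compl,
      compl_compl, hcard]
  have h' : IsOrbitOrder M.dual.σ₁ (he.dual.toggle Tᶜ) pos := (he.dual_toggle_compl T).symm ▸ h
  refine ⟨pos, ⟨h.injective, fun x => ?_, ?_, ?_⟩, hlt⟩
  · rcases (pos x).even_or_odd with hx | hx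
    exacts [.inl (h.pos_left_of_even x hx), .inr (h.pos_left_of_odd x hx)]
  · exact he.noncrossing_σ₀ h (fun u => hbdry ▸ orbitSetoid_apply (by simp) u) hmono
  · refine he.dual.noncrossing_σ₀ h' (fun u => ?_) hmono'
    exact ((he.dual_boundary_compl T).trans hbdry) ▸ orbitSetoid_apply (s := M.σ₂) (by simp) u

end FlagSystem

/-! ### Drawing maps in the grid -/

/-- The left half of a rectangular arch over the points `pos x` and `pos (s x)` if the first of them
is the left one, and the right half otherwise. The height of the arch is its width, so that nested
arches are disjoint. -/
def halfArch {F : Type*} (pos : F → ℕ) (s : F → F) (x : F) : Set (ℕ × ℕ) :=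
  {p | p.1 = pos x ∧ p.2 ≤ (pos x).dist (pos (s x)) ∨
    p.1 ∈ Ico (pos x) (pos (s x)) ∧ p.2 = (pos x).dist (pos (s x))}

theorem natDist_lt {a b N : ℕ} (ha : a < N) (hb : b < N) : a.dist b < N := by
  simp only [Nat.dist]
  lia

section HalfArch

variable {F : Type*} {pos : F → ℕ} {s : F → F} {x y : F} {p : ℕ × ℕ}

theorem fst_eq_of_mem_halfArch {a : ℕ} (h : (a, 0) ∈ halfArch pos s x) : a = pos x := by
  simp only [halfArch, mem_ofPred_eq, mem_Ico, Nat.dist] at h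
  lia

theorem exists_mem_halfArch_adjacent (hpos : Function.Injective pos) (hs : IsPairing s) (x : F) :
    ∃ a b, (a, (pos x).dist (pos (s x))) ∈ halfArch pos s x ∧
      (b, (pos x).dist (pos (s x))) ∈ halfArch pos s (s x) ∧ (a + 1 = b ∨ b + 1 = a) := by
  simp only [halfArch, hs.involutive x, mem_ofPred_eq, mem_Ico, Nat.dist]
  rcases (hpos.ne (hs.ne_self x)).lt_or_gt with h | h
  · exact ⟨pos x, pos x - 1, by lia⟩
  · exact ⟨pos (s x) - 1, pos (s x), by lia⟩

theorem exists_left_end_of_mem_halfArch (hpos : Function.Injective pos) (hs : IsPairing s)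
    (hp : p ∈ halfArch pos s x) :
    ∃ z, (z = x ∨ z = s x) ∧ pos z < pos (s z) ∧
      ((p.1 = pos z ∨ p.1 = pos (s z)) ∧ p.2 ≤ pos (s z) - pos z ∨
        p.1 ∈ Icc (pos z) (pos (s z)) ∧ p.2 = pos (s z) - pos z) := by
  have hne := hpos.ne (hs.ne_self x)
  simp only [halfArch, mem_ofPred_eq, mem_Ico, Nat.dist] at hp
  rcases hne.lt_or_gt with h | h
  · refine ⟨s x, Or.inr rfl, ?_⟩
    rw [hs.involutive, mem_Icc]
    lia
  · refine ⟨x, Or.inl rfl, ?_⟩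
    rw [mem_Icc]
    lia

theorem Noncrossing.eq_of_mem_halfArch (h : Noncrossing pos s) (hpos : Function.Injective pos)
    (hs : IsPairing s) (hx : p ∈ halfArch pos s x) (hy : p ∈ halfArch pos s y) : x = y := by
  by_contra hxy
  by_cases hxy' : y = s x
  · have hne := hpos.ne (hs.ne_self x)
    simp only [hxy', halfArch, hs.involutive x, mem_ofPred_eq, mem_Ico, Nat.dist] at hx hy
    lia
  obtain ⟨z, hz, hlt, hpz⟩ := exists_left_end_of_mem_halfArch hpos hs hx
  obtain ⟨w, hw, hlt', hpw⟩ := exists_left_end_of_mem_halfArch hpos hs hy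
  have hzw : z ≠ w ∧ z ≠ s w ∧ s z ≠ w ∧ s z ≠ s w := by
    have := hs.involutive x
    have := hs.involutive y
    grind
  have hzw₁ := hpos.ne hzw.1
  have hzw₂ := hpos.ne hzw.2.1
  have hzw₃ := hpos.ne hzw.2.2.1
  have hzw₄ := hpos.ne hzw.2.2.2
  have := h z w
  have := h w z
  simp only [mem_Icc] at hpz hpw
  lia

end HalfArch

namespace FlagSystem

variable {M : FlagSystem} {pos : M.F → ℕ} {N : ℕ} {x y : M.F}

/-- The graph on the flags in which each flag is joined to its images under `σ₀`, `σ₁` and `σ₂`. -/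
def flagGraph (M : FlagSystem) : SimpleGraph M.F :=
  SimpleGraph.fromRel fun x y => y = M.σ₀ x ∨ y = M.σ₁ x ∨ y = M.σ₂ x

/-- The set of grid points that represents the flag `x` in the drawing of the flag graph with `σ₀`
above and `σ₂` below the line at height `N`. -/
def flagRegion (M : FlagSystem) (pos : M.F → ℕ) (N : ℕ) (x : M.F) : Set (ℕ × ℕ) :=
  {p | N ≤ p.2 ∧ (p.1, p.2 - N) ∈ halfArch pos M.σ₀ x ∨
    p.2 ≤ N ∧ (p.1, N - p.2) ∈ halfArch pos M.σ₂ x}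

theorem mem_flagRegion_base (pos : M.F → ℕ) (N : ℕ) (x : M.F) :
    (pos x, N) ∈ M.flagRegion pos N x :=
  Or.inl ⟨le_rfl, Or.inl ⟨rfl, by simp⟩⟩

theorem fst_eq_of_mem_flagRegion {p : ℕ × ℕ} (hp : p ∈ M.flagRegion pos N x) (hpN : p.2 = N) :
    p.1 = pos x := by
  rcases hp with ⟨-, hp⟩ | ⟨-, hp⟩ <;>
    exact fst_eq_of_mem_halfArch (by simpa only [hpN, Nat.sub_self] using hp)

theorem flagRegion_subset (hN : ∀ x, pos x < N) (x : M.F) :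
    M.flagRegion pos N x ⊆ Iio (2 * N) ×ˢ Iio (2 * N) := by
  intro p hp
  have := hN x
  have := hN (M.σ₀ x)
  have := hN (M.σ₂ x)
  have := natDist_lt (hN x) (hN (M.σ₀ x))
  simp only [flagRegion, halfArch, mem_ofPred_eq, mem_Ico] at hp
  simp only [mem_prod, mem_Iio]
  lia

theorem flagRegion_eq (hN : ∀ x, pos x < N) (x : M.F) :
    M.flagRegion pos N x =
      {pos x} ×ˢ Icc (N - (pos x).dist (pos (M.σ₂ x))) (N + (pos x).dist (pos (M.σ₀ x))) ∪
        ⋃ b : Bool, insert (pos x) (Ico (pos x) (pos (bif b then M.σ₀ x else M.σ₂ x))) ×ˢ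
          {bif b then N + (pos x).dist (pos (M.σ₀ x))
            else N - (pos x).dist (pos (M.σ₂ x))} := by
  have := natDist_lt (hN x) (hN (M.σ₂ x))
  ext p
  simp only [flagRegion, halfArch, mem_ofPred_eq, mem_Ico, mem_union, mem_prod, mem_iUnion,
    mem_singleton_iff, mem_insert_iff, mem_Icc, Bool.exists_bool, cond_true, cond_false]
  lia

theorem connected_flagRegion (hN : ∀ x, pos x < N) (x : M.F) :
    (quarterGrid.induce (M.flagRegion pos N x)).Connected := by
  have ordConnected_insert (a b : ℕ) : (insert a (Ico a b)).OrdConnected := by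
    rcases le_or_gt b a with h | h
    · simpa [h] using ordConnected_singleton
    · simpa [h] using ordConnected_Ico
  rw [flagRegion_eq hN]
  refine connected_induce_union_iUnion
    (connected_induce_rectangle (singleton_nonempty _) (nonempty_Icc.2 (by lia))) (fun b => ?_)
    fun b => ?_
  · have := ordConnected_insert (pos x) (pos (bif b then M.σ₀ x else M.σ₂ x))
    exact connected_induce_rectangle (insert_nonempty _ _) (singleton_nonempty _)
  · refine ⟨(pos x, bif b then N + (pos x).dist (pos (M.σ₀ x))
      else N - (pos x).dist (pos (M.σ₂ x))), ?_⟩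
    cases b <;> simp <;> lia

theorem IsBookOrder.disjoint_flagRegion (h : M.IsBookOrder pos) (N : ℕ) (hxy : x ≠ y) :
    Disjoint (M.flagRegion pos N x) (M.flagRegion pos N y) := by
  refine disjoint_left.2 fun p hx hy => hxy ?_
  by_cases hpN : p.2 = N
  · exact h.injective <|
      (fst_eq_of_mem_flagRegion hx hpN).symm.trans (fst_eq_of_mem_flagRegion hy hpN)
  rcases hx with ⟨hpx, hx⟩ | ⟨hpx, hx⟩ <;> rcases hy with ⟨hpy, hy⟩ | ⟨hpy, hy⟩
  · exact h.noncrossing_σ₀.eq_of_mem_halfArch h.injective M.isPairing_σ₀ hx hy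
  · lia
  · lia
  · exact h.noncrossing_σ₂.eq_of_mem_halfArch h.injective M.isPairing_σ₂ hx hy

theorem IsBookOrder.isMinorModel_flagRegion (h : M.IsBookOrder pos) (hN : ∀ x, pos x < N) :
    IsMinorModel quarterGrid M.flagGraph (M.flagRegion pos N) := by
  refine ⟨connected_flagRegion hN, fun x y hxy => h.disjoint_flagRegion N hxy, ?_⟩
  suffices H : ∀ x y, y = M.σ₀ x ∨ y = M.σ₁ x ∨ y = M.σ₂ x →
      ∃ a ∈ M.flagRegion pos N x, ∃ b ∈ M.flagRegion pos N y, quarterGrid.Adj a b by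
    rintro x y ⟨-, hxy | hxy⟩
    · exact H x y hxy
    · obtain ⟨a, ha, b, hb, hab⟩ := H y x hxy
      exact ⟨b, hb, a, ha, hab.symm⟩
  rintro x _ (rfl | rfl | rfl)
  · obtain ⟨a, b, ha, hb, hab⟩ := exists_mem_halfArch_adjacent h.injective M.isPairing_σ₀ x
    set d := (pos x).dist (pos (M.σ₀ x))
    exact ⟨(a, N + d), Or.inl ⟨Nat.le_add_right _ _, by simpa using ha⟩, (b, N + d),
      Or.inl ⟨Nat.le_add_right _ _, by simpa using hb⟩, quarterGrid_adj.2 (Or.inl ⟨hab, rfl⟩)⟩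
  · exact ⟨_, mem_flagRegion_base pos N x, _, mem_flagRegion_base pos N (M.σ₁ x),
      quarterGrid_adj.2 (Or.inl ⟨(h.pos_σ₁ x).imp Eq.symm id, rfl⟩)⟩
  · obtain ⟨a, b, ha, hb, hab⟩ := exists_mem_halfArch_adjacent h.injective M.isPairing_σ₂ x
    have hd := (natDist_lt (hN x) (hN (M.σ₂ x))).le
    set d := (pos x).dist (pos (M.σ₂ x))
    exact ⟨(a, N - d), Or.inr ⟨Nat.sub_le _ _, by simpa [Nat.sub_sub_self hd] using ha⟩,
      (b, N - d), Or.inr ⟨Nat.sub_le _ _, by simpa [Nat.sub_sub_self hd] using hb⟩,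
      quarterGrid_adj.2 (Or.inl ⟨hab, rfl⟩)⟩

end FlagSystem

theorem exists_isMinorModel_of_induce {W : Type*} [Fintype W] {H : SimpleGraph W} {s : Set W}
    (hs : ∀ ⦃v w⦄, H.Adj v w → v ∈ s) {φ : s → Set (ℕ × ℕ)}
    (hφ : IsMinorModel quarterGrid (H.induce s) φ) {m : ℕ} (hm : ∀ w, φ w ⊆ Iio m ×ˢ Iio m) :
    ∃ ψ : W → Set (ℕ × ℕ), IsMinorModel quarterGrid H ψ ∧
      ∀ w, ψ w ⊆ Iio (m + Fintype.card W) ×ˢ Iio (m + Fintype.card W) := by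
  classical
  let idx : W ↪ ℕ := (Fintype.equivFin W).toEmbedding.trans Fin.valEmbedding
  have hidx (w) : idx w < Fintype.card W := (Fintype.equivFin W w).isLt
  let ψ (w : W) : Set (ℕ × ℕ) := if h : w ∈ s then φ ⟨w, h⟩ else {(m + idx w, 0)}
  have hψ {w} (h : w ∈ s) : ψ w = φ ⟨w, h⟩ := dif_pos h
  have hψ' {w} (h : w ∉ s) : ψ w = {(m + idx w, 0)} := dif_neg h
  have hdisj {v w} (hv : v ∈ s) (hw : w ∉ s) : Disjoint (ψ v) (ψ w) := by
    rw [hψ hv, hψ' hw, disjoint_singleton_right]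
    intro h
    have : m + idx w < m := (hm _ h).1
    lia
  refine ⟨ψ, ⟨fun w => ?_, fun v w hvw => ?_, fun v w hvw => ?_⟩, fun w => ?_⟩
  · by_cases hw : w ∈ s
    · rw [hψ hw]
      exact hφ.1 _
    · rw [hψ' hw]
      exact .of_subsingleton
  · change Disjoint (ψ v) (ψ w)
    by_cases hv : v ∈ s <;> by_cases hw : w ∈ s
    · rw [hψ hv, hψ hw]
      exact hφ.2.1 fun h => hvw (congrArg Subtype.val h)
    · exact hdisj hv hw
    · exact (hdisj hw hv).symm
    · rw [hψ' hv, hψ' hw, disjoint_singleton]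
      exact fun h => hvw (idx.injective (Nat.add_left_cancel (congrArg Prod.fst h)))
  · rw [hψ (hs hvw), hψ (hs hvw.symm)]
    exact hφ.2.2 (w₁ := ⟨v, _⟩) (w₂ := ⟨w, _⟩) hvw
  · by_cases hw : w ∈ s
    · rw [hψ hw]
      refine (hm _).trans (prod_mono ?_ ?_) <;> exact Iio_subset_Iio (Nat.le_add_right _ _)
    · rw [hψ' hw, singleton_subset_iff]
      have := hidx w
      simp only [mem_prod, mem_Iio]
      lia

namespace FlagSystem

variable {M : FlagSystem} {V : Type*} {G : SimpleGraph V}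

theorem sameOrbit_iff {S : Set (Equiv.Perm M.F)} {x y : M.F} :
    M.SameOrbit S x y ↔ orbitSetoid S x y := by
  rw [Setoid.comm']
  exact ⟨fun ⟨g, hg, h⟩ => ⟨⟨g, hg⟩, h⟩, fun ⟨⟨g, hg⟩, h⟩ => ⟨g, hg, h⟩⟩

theorem Realizes.exists_isEdgeMap (h : M.Realizes G) : ∃ fe : M.F → G.edgeSet, M.IsEdgeMap fe := by
  obtain ⟨_, fe, -, -, -, -, fe_σ₀, fe_σ₂, -, fe_eq, -, hinc⟩ := h
  refine ⟨fe, le_antisymm (fun x y hxy => sameOrbit_iff.1 (fe_eq x y hxy))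
    (orbitSetoid_pair_le_iff.2 ⟨fe_σ₀, fe_σ₂⟩), fun e => ?_⟩
  exact (hinc e _ (Sym2.out_fst_mem _)).imp fun _ => And.left

theorem Realizes.card_flags_le [Fintype V] (h : M.Realizes G) :
    Fintype.card M.F ≤ 2 * Fintype.card V ^ 2 := by
  classical
  obtain ⟨fe, hfe⟩ := h.exists_isEdgeMap
  have hedges : Fintype.card G.edgeSet ≤ (Fintype.card V).choose 2 := by
    rw [← edgeFinset_card]
    exact G.card_edgeFinset_le_card_choose_two
  have hchoose : (Fintype.card V).choose 2 * 2 ≤ Fintype.card V ^ 2 := by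
    rw [Nat.choose_two_right, sq]
    exact (Nat.div_mul_le_self _ _).trans (Nat.mul_le_mul_left _ (Nat.sub_le _ _))
  calc Fintype.card M.F ≤ 4 * Fintype.card G.edgeSet := hfe.card_flags_le
    _ ≤ 2 * Fintype.card V ^ 2 := by lia

theorem Realizes.hasMinor_flagGraph (h : M.Realizes G) :
    HasMinor M.flagGraph (G.induce {v | ∃ e ∈ G.edgeSet, v ∈ e}) := by
  obtain ⟨fv, fe, fv_mem, fv_σ₁, fv_σ₂, fv_σ₀, fe_σ₀, -, fv_eq, -, fv_surj, hinc⟩ := h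
  refine ⟨fun v => fv ⁻¹' {v}, fun v => ?_, fun v w hvw => ?_, ?_⟩
  · obtain ⟨x, rfl⟩ := fv_surj v
    set K := M.flagGraph.induce (fv ⁻¹' {fv x})
    let s : Set M.F := {y | ∃ hy : fv y = fv x, K.Reachable ⟨x, rfl⟩ ⟨y, hy⟩}
    have hs (z) (hz : z ∈ s) : M.σ₁ z ∈ s ∧ M.σ₂ z ∈ s := by
      obtain ⟨hz, hxz⟩ := hz
      refine ⟨⟨(fv_σ₁ z).trans hz, hxz.trans (Adj.reachable ⟨?_, ?_⟩)⟩,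
        ⟨(fv_σ₂ z).trans hz, hxz.trans (Adj.reachable ⟨?_, ?_⟩)⟩⟩
      exacts [(M.fpf₁ z).symm, by simp, (M.fpf₂ z).symm, by simp]
    refine connected_iff_exists_forall_reachable _ |>.2 ⟨⟨x, rfl⟩, fun ⟨y, hy⟩ => ?_⟩
    exact ((mem_iff_mem_of_orbitSetoid M.isPairing_σ₁.involutive M.isPairing_σ₂.involutive hs
      (sameOrbit_iff.1 (fv_eq x y hy.symm))).1 ⟨rfl, .refl _⟩).2
  · exact Disjoint.preimage fv (disjoint_singleton.2 hvw)
  · rintro v w (hvw : G.Adj v w)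
    obtain ⟨x, hex, hxv⟩ := hinc ⟨s(v, w), hvw⟩ v (Sym2.mem_mk_left _ _)
    have hw : (fv (M.σ₀ x) : V) ∈ s(v.1, w.1) := by simpa [fe_σ₀, hex] using fv_mem (M.σ₀ x)
    have hne : (fv (M.σ₀ x) : V) ≠ v := fun h => fv_σ₀ x (Subtype.ext (h.trans hxv.symm))
    refine ⟨x, Subtype.ext hxv, M.σ₀ x, Subtype.ext ((Sym2.mem_iff.1 hw).resolve_left hne), ?_⟩
    exact ⟨(M.fpf₀ x).symm, Or.inl (Or.inl rfl)⟩

theorem Realizes.exists_isMinorModel_quarterGrid [Fintype V] (h : M.Realizes G)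
    (hM : M.nV + M.nF = 2 * M.nC + M.nE) {m : ℕ}
    (hm : 16 * Fintype.card V ^ 4 + Fintype.card V ≤ m) :
    ∃ φ : V → Set (ℕ × ℕ), IsMinorModel quarterGrid G φ ∧ ∀ w, φ w ⊆ Iio m ×ˢ Iio m := by
  obtain ⟨μ, hμ⟩ := h.hasMinor_flagGraph
  obtain ⟨pos, hpos, hlt⟩ := exists_isBookOrder hM
  have hN (x) : pos x < 8 * Fintype.card V ^ 4 :=
    (hlt x).trans_le <| by
      have := h.card_flags_le
      calc 2 * Fintype.card M.F * Fintype.card M.F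
        _ ≤ 2 * (2 * Fintype.card V ^ 2) * (2 * Fintype.card V ^ 2) := by gcongr
        _ = 8 * Fintype.card V ^ 4 := by ring
  obtain ⟨φ, hφ, hφm⟩ := exists_isMinorModel_of_induce
    (s := {v | ∃ e ∈ G.edgeSet, v ∈ e}) (fun v w hvw => ⟨s(v, w), hvw, Sym2.mem_mk_left v w⟩)
    ((hpos.isMinorModel_flagRegion hN).comp hμ)
    fun v => iUnion₂_subset fun x _ => flagRegion_subset hN x
  refine ⟨φ, hφ, fun w => (hφm w).trans (prod_mono ?_ ?_)⟩ <;> exact Iio_subset_Iio (by lia)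

end FlagSystem

/-! ### Rotation systems -/

theorem exists_perm_orbitSetoid_eq_ker {X Y : Type*} [Finite X] (p : X → Y) :
    ∃ f : Equiv.Perm X, orbitSetoid {f} = Setoid.ker p := by
  have hcycle (y : Y) : ∃ g : Equiv.Perm {x // p x = y}, ∀ a b, orbitSetoid {g} b a := by
    obtain ⟨g, hg, -⟩ := (univ : Set {x // p x = y}).to_countable.exists_cycleOn
    refine ⟨g, fun a b => ?_⟩
    obtain ⟨i, hi⟩ := hg.2 (mem_univ a) (mem_univ b)
    exact ⟨⟨g ^ i, Subgroup.zpow_mem _ (Subgroup.subset_closure (mem_singleton g)) i⟩, hi⟩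
  choose g hg using hcycle
  let f : Equiv.Perm X := (Equiv.sigmaFiberEquiv p).permCongr (Equiv.sigmaCongrRight g)
  have hf (y) (z : {x // p x = y}) : f z = g y z := by
    obtain ⟨x, rfl⟩ := z
    rfl
  refine ⟨f, le_antisymm (orbitSetoid_le_iff.2 ?_) fun x y hxy => ?_⟩
  · rintro _ rfl x
    exact congrArg p (hf _ ⟨x, rfl⟩) |>.trans (g (p x) ⟨x, rfl⟩).2
  · have hle : orbitSetoid {g (p y)} ≤ (orbitSetoid {f}).comap Subtype.val := by
      refine orbitSetoid_le_iff.2 ?_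
      rintro _ rfl z
      rw [Setoid.comap_rel, ← hf]
      exact orbitSetoid_apply (mem_singleton f) z.1
    exact hle (hg (p y) ⟨y, rfl⟩ ⟨x, hxy⟩)

namespace FlagSystem

section Rotation

variable {V : Type} [Finite V] {G : SimpleGraph V}

/-- The map whose vertices are the orbits of the permutation `f` of the darts of `G`, and whose
edges are the untwisted ribbons over the edges of `G`. Each dart carries two flags, one for either
side of the ribbon; `f` takes one side of a dart to the other side of the next dart. -/
noncomputable def ofRotation (f : Equiv.Perm G.Dart) : FlagSystem where
  F := G.Dart × Bool
  fin :=
    have : Finite G.Dart := .of_injective _ Dart.toProd_injective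
    Fintype.ofFinite _
  σ₀ := .prodCongr Dart.symm_involutive.toPerm Equiv.boolNot
  σ₁ :=
    { toFun x := (bif x.2 then f x.1 else f.symm x.1, !x.2)
      invFun x := (bif x.2 then f x.1 else f.symm x.1, !x.2)
      left_inv := by rintro ⟨d, _ | _⟩ <;> simp
      right_inv := by rintro ⟨d, _ | _⟩ <;> simp }
  σ₂ := .prodCongr (.refl _) Equiv.boolNot
  inv₀ := by ext1 ⟨d, b⟩; simp
  inv₁ := by ext1 ⟨d, _ | _⟩ <;> simp
  inv₂ := by ext1 ⟨d, b⟩; simp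
  fpf₀ := by simp [Prod.ext_iff]
  fpf₁ := by simp [Prod.ext_iff]
  fpf₂ := by simp [Prod.ext_iff]
  comm02 := by ext1 ⟨d, b⟩; simp
  fpf02 := by simp [Prod.ext_iff, Dart.symm_ne]

theorem orbitSetoid_ofRotation_flip {f : Equiv.Perm G.Dart}
    {S : Set (Equiv.Perm (ofRotation f).F)} (hS : (ofRotation f).σ₂ ∈ S) (d : G.Dart)
    (b b' : Bool) : orbitSetoid S (d, b) (d, b') := by
  rcases eq_or_ne b b' with rfl | h
  · exact Setoid.refl' _ _
  · rw [Bool.eq_not_of_ne h]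
    exact orbitSetoid_apply hS ((d, b') : (ofRotation f).F)

theorem orbitSetoid_ofRotation_σ₁_σ₂ {f : Equiv.Perm G.Dart} {d d' : G.Dart}
    (h : orbitSetoid {f} d d') (b b' : Bool) :
    orbitSetoid {(ofRotation f).σ₁, (ofRotation f).σ₂} (d, b) (d', b') := by
  let r : Setoid (ofRotation f).F := orbitSetoid {(ofRotation f).σ₁, (ofRotation f).σ₂}
  have hflip (d : G.Dart) (b b' : Bool) : r (d, b) (d, b') :=
    orbitSetoid_ofRotation_flip (mem_insert_of_mem _ (mem_singleton _)) d b b'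
  have hle : orbitSetoid {f} ≤ r.comap fun d => (d, true) := by
    refine orbitSetoid_le_iff.2 ?_
    rintro _ rfl d
    exact r.trans (hflip _ true false)
      (orbitSetoid_left _ (ofRotation _).σ₂ ((d, true) : (ofRotation _).F))
  exact r.trans (hflip d b true) (r.trans (hle h) (hflip d' true b'))

theorem orbitSetoid_ofRotation_σ₀_σ₂ {f : Equiv.Perm G.Dart} {d d' : G.Dart}
    (h : d.edge = d'.edge) (b b' : Bool) :
    orbitSetoid {(ofRotation f).σ₀, (ofRotation f).σ₂} (d, b) (d', b') := by
  have hflip (d : G.Dart) (b b' : Bool) := orbitSetoid_ofRotation_flip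
    (mem_insert_of_mem (ofRotation f).σ₀ (mem_singleton _)) d b b'
  rcases (dart_edge_eq_iff d d').1 h with rfl | rfl
  · exact hflip d b b'
  · exact Setoid.trans' _ (hflip _ b !b')
      (orbitSetoid_left _ (ofRotation f).σ₂ ((d', b') : (ofRotation f).F))

theorem realizes_ofRotation {f : Equiv.Perm G.Dart}
    (hf : orbitSetoid {f} = Setoid.ker fun d : G.Dart => d.fst) : (ofRotation f).Realizes G := by
  have hfst (d : G.Dart) : (f d).fst = d.fst :=
    hf.le (orbitSetoid_apply (mem_singleton f) d)
  have hfst' (d : G.Dart) : (f.symm d).fst = d.fst := by rw [← hfst, f.apply_symm_apply]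
  refine ⟨fun x => ⟨x.1.fst, x.1.edge, x.1.edge_mem, Sym2.mem_mk_left _ _⟩,
    fun x => ⟨x.1.edge, x.1.edge_mem⟩, fun x => Sym2.mem_mk_left _ _, ?_, fun _ => rfl,
    fun x h => x.1.snd_ne_fst (congrArg Subtype.val h), fun x => Subtype.ext x.1.edge_symm,
    fun _ => rfl, ?_, ?_, ?_, ?_⟩
  · rintro ⟨d, _ | _⟩
    exacts [Subtype.ext (hfst' d), Subtype.ext (hfst d)]
  · rintro ⟨d, b⟩ ⟨d', b'⟩ h
    exact sameOrbit_iff.2 (orbitSetoid_ofRotation_σ₁_σ₂ (hf.ge (congrArg Subtype.val h)) b b')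
  · rintro ⟨d, b⟩ ⟨d', b'⟩ h
    exact sameOrbit_iff.2 (orbitSetoid_ofRotation_σ₀_σ₂ (congrArg Subtype.val h) b b')
  · rintro ⟨v, e, he, hv⟩
    obtain ⟨w, rfl⟩ := Sym2.mem_iff_exists.1 hv
    exact ⟨(⟨(v, w), he⟩, true), rfl⟩
  · rintro ⟨e, he⟩ v hv
    obtain ⟨w, rfl⟩ := Sym2.mem_iff_exists.1 hv
    exact ⟨(⟨(v, w), he⟩, true), rfl, rfl⟩

theorem exists_realizes (G : SimpleGraph V) : ∃ M : FlagSystem, M.Realizes G := by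
  have : Finite G.Dart := .of_injective _ Dart.toProd_injective
  obtain ⟨f, hf⟩ := exists_perm_orbitSetoid_eq_ker fun d : G.Dart => d.fst
  exact ⟨ofRotation f, realizes_ofRotation hf⟩

theorem exists_realizes_of_eulerGenus_eq_zero (hG : eulerGenus G = 0) :
    ∃ M : FlagSystem, M.Realizes G ∧ M.nV + M.nF = 2 * M.nC + M.nE := by
  obtain ⟨M, hM⟩ := exists_realizes G
  have hne : {g | ∃ M : FlagSystem, M.Realizes G ∧ g + M.nV + M.nF = 2 * M.nC + M.nE}.Nonempty :=
    ⟨2 * M.nC + M.nE - (M.nV + M.nF), M, hM, by have := M.nV_add_nF_le; lia⟩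
  obtain ⟨M, hM, heuler⟩ := Nat.sInf_mem hne
  rw [← eulerGenus, hG, zero_add] at heuler
  exact ⟨M, hM, heuler⟩

end Rotation

end FlagSystem

/-! ### The treewidth bound -/

theorem hasMinor_of_hasMinor_gridGraph_of_eulerGenus_eq_zero {V W : Type} [Fintype W]
    {G : SimpleGraph V} {H : SimpleGraph W} {a : W} (ha : eulerGenus (H.induce {u | u ≠ a}) = 0)
    {u : V} {r : ℕ} (hu : ∀ w, G.Reachable u w ∧ G.dist u w ≤ r) {n k : ℕ}
    (hn : Fintype.card W = n + 1)
    (hk : (n + 1) * (16 * n ^ 4 + n + (1 + n * (r + 1)) + 1) ≤ k) (hG : HasMinor G (gridGraph k)) :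
    HasMinor G H := by
  classical
  obtain ⟨M, hM, heuler⟩ := FlagSystem.exists_realizes_of_eulerGenus_eq_zero ha
  have hcard : Fintype.card {u | u ≠ a} = n := by
    rw [Set.card_ne_eq, hn, Nat.add_sub_cancel]
  obtain ⟨φ, hφ, hφm⟩ := hM.exists_isMinorModel_quarterGrid heuler le_rfl
  rw [hcard] at hφm
  exact hasMinor_of_hasMinor_gridGraph hφ hφm hu hn hk hG

theorem grid_bound_le (n r : ℕ) {N : ℕ} (hN : 7 ≤ N) :
    (n + 1) ^ 2 * ((n + 1) * (16 * n ^ 4 + n + (1 + n * (r + 1)) + 1)) + (n + 1) ^ N ≤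
      22 * ((n + 1) ^ 4 * r + (n + 1) ^ N) := by
  have hn : n ^ 4 ≤ (n + 1) ^ 4 := Nat.pow_le_pow_left n.le_succ 4
  have ht : n + 1 ≤ (n + 1) ^ 4 := Nat.le_self_pow four_ne_zero _
  have hpow : (n + 1) ^ 7 ≤ (n + 1) ^ N := Nat.pow_le_pow_right n.succ_pos hN
  have hside : 16 * n ^ 4 + n + (1 + n * (r + 1)) + 1 ≤ 21 * (n + 1) ^ 4 + (n + 1) * r := by
    have : n * (r + 1) = n * r + n := mul_add_one n r
    have : (n + 1) * r = n * r + r := add_one_mul n r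
    omega
  calc (n + 1) ^ 2 * ((n + 1) * (16 * n ^ 4 + n + (1 + n * (r + 1)) + 1)) + (n + 1) ^ N
    _ ≤ (n + 1) ^ 2 * ((n + 1) * (21 * (n + 1) ^ 4 + (n + 1) * r)) + (n + 1) ^ N := by gcongr
    _ = 21 * (n + 1) ^ 7 + (n + 1) ^ 4 * r + (n + 1) ^ N := by ring
    _ ≤ 22 * ((n + 1) ^ 4 * r + (n + 1) ^ N) := by omega

/-- Assuming the linear grid-minor bound `tw = O(t²·k + t^2304)` for graphs excluding a
`t`-vertex graph and the `(k × k)`-grid as minors, every graph of radius at most `r`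
excluding a `t`-vertex apex graph `H` as a minor has treewidth `O(t⁴·r + t^2304)`. -/
theorem apex_minor_free_bounded_radius (c₀ : ℕ)
    (hgrid : ∀ (t k : ℕ) (V W : Type) (_ : Fintype V) (_ : Fintype W)
      (H : SimpleGraph W) (G : SimpleGraph V),
      Fintype.card W = t → ¬ HasMinor G H → ¬ HasMinor G (gridGraph k) →
      treewidth G ≤ c₀ * (t ^ 2 * k + t ^ 2304)) :
    ∃ C : ℕ, ∀ (t r : ℕ) (V W : Type) (_ : Fintype V) (_ : Fintype W)
      (H : SimpleGraph W) (G : SimpleGraph V),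
      Fintype.card W = t →
      (∃ a : W, eulerGenus (H.induce {u | u ≠ a}) = 0) →
      ¬ HasMinor G H →
      (∃ u : V, ∀ w : V, G.Reachable u w ∧ G.dist u w ≤ r) →
      treewidth G ≤ C * (t ^ 4 * r + t ^ 2304) := by
  refine ⟨c₀ * 22, ?_⟩
  rintro t r V W fV fW H G ht ⟨a, ha⟩ hH ⟨u, hu⟩
  obtain ⟨n, rfl⟩ : ∃ n, t = n + 1 :=
    Nat.exists_eq_add_one.2 (ht ▸ Fintype.card_pos_iff.2 ⟨a⟩)
  have hk : ¬ HasMinor G (gridGraph ((n + 1) * (16 * n ^ 4 + n + (1 + n * (r + 1)) + 1))) :=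
    fun h => hH (hasMinor_of_hasMinor_gridGraph_of_eulerGenus_eq_zero ha hu ht le_rfl h)
  rw [mul_assoc]
  exact (hgrid _ _ V W fV fW H G ht hH hk).trans
    (Nat.mul_le_mul_left _ (grid_bound_le n r (by norm_num)))
end
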